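/- arXiv:1805.00041 — 5 statements merged into one kernel-verified Lean document; each statement's English description precedes it below -/
import Mathlib

section
/- (Proposition 1) In the scheduling model with given per-chunk download amounts X(i), let t_f(i) be the first slot in which a positive amount of chunk i is downloaded under the forward greedy schedule, and let t_x(i) be the first slot in which a positive amount of chunk i is downloaded under any other in-order feasible schedule with the same per-chunk amounts. Then t_f(i) ≤ t_x(i) for every chunk i; moreover the completion slot of each chunk under the forward greedy schedule is no later than its completion slot under any in-order feasible schedule. -/
/-!
Write `Z k τ` for the amount of chunk `k` which the competing in-order schedule has downloaded by
slot `τ`. The theorem follows from the dominance bound `fwdRem X τ k ≤ X k - Z k τ` for all chunks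
and slots (`fwdRem_state`), proved by induction on the slot `τ`.

At the end of a slot (`fwdInner_spec`) the greedy either has completed everything, or it is held up
at a chunk `i`: all earlier chunks are complete, all later ones untouched, and either the bandwidth
of the slot is exhausted, or the slot is outside the window of `i`, or downloading `i` would
overflow the buffer. Since the competitor is in-order as well, being ahead of the greedy on any
chunk means having completed all chunks before `i` and being strictly ahead on `i`. This is
impossible in each case: with exhausted bandwidth the greedy total dominates the competitor's total;
before `t i` the competitor cannot have touched `i`; after `d i` the competitor had completed
`i` in the previous slot, hence so had the greedy; and in the buffer case the competitor has started
every chunk counted by the greedy, so it violates the buffer constraint itself.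
-/

/-!
Proposition 1: the forward greedy schedule starts and completes every chunk no
later than any in-order feasible schedule with the same per-chunk amounts.
-/

open scoped Classical

structure SchedModel where
  C : ℕ
  hC : 1 ≤ C
  L : ℝ
  hL : 0 < L
  B : ℕ → ℝ
  hB : ∀ j, 0 ≤ B j
  t : ℕ → ℕ
  d : ℕ → ℕ
  ht : ∀ i, 1 ≤ t i
  htd : ∀ i, t i ≤ d i
  tmono : Monotone t
  dmono : Monotone d
  Bm : ℝ
  hBm : 0 < Bm

/-- A feasible schedule for per-chunk download amounts `X`. -/
def SchedModel.IsSchedule (M : SchedModel) (X : ℕ → ℝ) (z : ℕ → ℕ → ℝ) : Prop :=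
  (∀ i j, 0 ≤ z i j) ∧
  (∀ i j, (j < M.t i ∨ M.d i < j) → z i j = 0) ∧
  (∀ i ∈ Finset.Icc 1 M.C, ∑ j ∈ Finset.Icc 1 (M.d i), z i j = X i) ∧
  (∀ j, ∑ i ∈ Finset.Icc 1 M.C, z i j ≤ M.B j) ∧
  (∀ τ, M.L * (((Finset.Icc 1 M.C).filter
      (fun i => τ < M.d i ∧ 0 < ∑ j ∈ Finset.Icc 1 τ, z i j)).card : ℝ) ≤ M.Bm)

/-- A schedule is in-order if chunks are downloaded in increasing index order. -/
def SchedModel.InOrder (z : ℕ → ℕ → ℝ) : Prop :=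
  ∀ i i' j j', i < i' → 0 < z i j → 0 < z i' j' → j ≤ j'

/-- Within-slot allocation of the forward greedy: processing chunks from index `i`
upwards with remaining slot bandwidth `b` and remaining undownloaded amounts `rem`
(the slot is left idle when downloading would violate the buffer constraint or the
current chunk's download window). Returns the amount downloaded of each chunk in
this slot. -/
noncomputable def SchedModel.fwdInner (M : SchedModel) (X : ℕ → ℝ) (j : ℕ) :
    ℕ → ℕ → ℝ → (ℕ → ℝ) → (ℕ → ℝ)
  | 0, _, _, _ => fun _ => 0
  | fuel + 1, i, b, rem =>
    if M.C < i then fun _ => 0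
    else if rem i ≤ 0 then M.fwdInner X j fuel (i + 1) b rem
    else if b ≤ 0 then fun _ => 0
    else if j < M.t i ∨ M.d i < j then fun _ => 0
    else if M.Bm < M.L * (((Finset.Icc 1 M.C).filter
        (fun i' => j < M.d i' ∧ (rem i' < X i' ∨ i' = i))).card : ℝ) then fun _ => 0
    else if b < rem i then fun i' => if i' = i then b else 0
    else fun i' => (if i' = i then rem i else 0) +
      M.fwdInner X j fuel (i + 1) (b - rem i) (Function.update rem i 0) i'

/-- Remaining undownloaded amounts after slot `j` under the forward greedy. -/
noncomputable def SchedModel.fwdRem (M : SchedModel) (X : ℕ → ℝ) : ℕ → ℕ → ℝ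
  | 0 => fun i => if i ∈ Finset.Icc 1 M.C then X i else 0
  | j + 1 => fun i =>
      M.fwdRem X j i - M.fwdInner X (j + 1) (M.C + 1) 1 (M.B (j + 1)) (M.fwdRem X j) i

/-- Amount of each chunk downloaded in slot `j` by the forward greedy schedule. -/
noncomputable def SchedModel.fwdAlloc (M : SchedModel) (X : ℕ → ℝ) (j : ℕ) : ℕ → ℝ :=
  if j = 0 then fun _ => 0
  else M.fwdInner X j (M.C + 1) 1 (M.B j) (M.fwdRem X (j - 1))

/-- First slot in which a positive amount of chunk `i` is downloaded by the forward
greedy. -/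
noncomputable def SchedModel.fwdFirst (M : SchedModel) (X : ℕ → ℝ) (i : ℕ) : ℕ :=
  sInf {j | 0 < M.fwdAlloc X j i}

/-- Completion slot of chunk `i` under the forward greedy. -/
noncomputable def SchedModel.fwdCompl (M : SchedModel) (X : ℕ → ℝ) (i : ℕ) : ℕ :=
  sInf {j | M.fwdRem X j i ≤ 0}

/-! ### State of the greedy at the end of a slot -/

/-- Intermediate states of the greedy: remaining amounts lie between `0` and `X`, and every chunk
after an unfinished one is untouched. -/
def SchedModel.PrefixState (M : SchedModel) (X rem : ℕ → ℝ) : Prop :=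
  (∀ k ∈ Finset.Icc 1 M.C, 0 ≤ rem k ∧ rem k ≤ X k) ∧
  ∀ k ∈ Finset.Icc 1 M.C, ∀ l ∈ Finset.Icc 1 M.C, k < l → 0 < rem k → rem l = X l

/-- The greedy, having downloaded the total amount `s` out of `b` in slot `j`, cannot continue with
chunk `i` from the remaining amounts `rem`: the slot is used up, or it lies outside the window of
`i`, or the buffer would overflow. -/
def SchedModel.Blocked (M : SchedModel) (X : ℕ → ℝ) (j : ℕ) (b s : ℝ) (rem : ℕ → ℝ) (i : ℕ) :
    Prop :=
  s = b ∨ j < M.t i ∨ M.d i < j ∨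
    M.Bm < M.L * (((Finset.Icc 1 M.C).filter
      (fun i' => j < M.d i' ∧ (rem i' < X i' ∨ i' = i))).card : ℝ)

/-- The ways in which a slot can end, in terms of the remaining amounts `rem` at its end: everything
is complete, or the greedy is blocked at the first unfinished chunk `i`. -/
def SchedModel.SlotEnd (M : SchedModel) (X : ℕ → ℝ) (j : ℕ) (b s : ℝ) (rem : ℕ → ℝ) : Prop :=
  (∀ k ∈ Finset.Icc 1 M.C, rem k = 0) ∨
  ∃ i ∈ Finset.Icc 1 M.C, 0 < rem i ∧ (∀ k ∈ Finset.Icc 1 M.C, k < i → rem k = 0) ∧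
    (∀ k ∈ Finset.Icc 1 M.C, i < k → rem k = X k) ∧ M.Blocked X j b s rem i

/-- The hypothesis `M.C + 2 ≤ fuel + i` says that the fuel suffices to step past the last chunk. -/
theorem SchedModel.fwdInner_spec (M : SchedModel) (X : ℕ → ℝ) (j : ℕ) :
    ∀ (fuel i : ℕ) (b : ℝ) (rem : ℕ → ℝ), M.C + 2 ≤ fuel + i → 1 ≤ i → 0 ≤ b →
      M.PrefixState X rem → (∀ k ∈ Finset.Icc 1 M.C, k < i → rem k = 0) →
      (∀ k ∈ Finset.Icc 1 M.C, 0 ≤ M.fwdInner X j fuel i b rem k ∧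
        M.fwdInner X j fuel i b rem k ≤ rem k) ∧
      M.SlotEnd X j b (∑ k ∈ Finset.Icc 1 M.C, M.fwdInner X j fuel i b rem k)
        (fun k => rem k - M.fwdInner X j fuel i b rem k) := by
  intro fuel
  induction fuel with
  | zero =>
    intro i b rem hf hi hb hP h0
    simp only [SchedModel.fwdInner, sub_zero]
    refine ⟨fun k hk => ⟨le_rfl, (hP.1 k hk).1⟩, Or.inl fun k hk => h0 k hk ?_⟩
    have := (Finset.mem_Icc.1 hk).2
    omega
  | succ fuel ih =>
    intro i b rem hf hi hb hP h0
    by_cases hC : M.C < i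
    · simp only [SchedModel.fwdInner, if_pos hC, sub_zero]
      refine ⟨fun k hk => ⟨le_rfl, (hP.1 k hk).1⟩, Or.inl fun k hk => h0 k hk ?_⟩
      have := (Finset.mem_Icc.1 hk).2
      omega
    have hiC : i ∈ Finset.Icc 1 M.C := Finset.mem_Icc.2 ⟨hi, by omega⟩
    by_cases hr : rem i ≤ 0
    · simp only [SchedModel.fwdInner, if_neg hC, if_pos hr]
      refine ih (i + 1) b rem (by omega) (by omega) hb hP fun k hk hki => ?_
      rcases Nat.lt_succ_iff_lt_or_eq.1 hki with h | rfl
      · exact h0 k hk h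
      · exact le_antisymm hr (hP.1 k hk).1
    have hri : 0 < rem i := not_le.1 hr
    have hlater : ∀ k ∈ Finset.Icc 1 M.C, i < k → rem k = X k :=
      fun k hk hik => hP.2 i hiC k hk hik hri
    -- All the cases in which nothing is downloaded from chunk `i` on.
    have hidle : M.Blocked X j b 0 rem i →
        (∀ k ∈ Finset.Icc 1 M.C, (0 : ℝ) ≤ 0 ∧ 0 ≤ rem k) ∧
        M.SlotEnd X j b 0 rem := fun h =>
      ⟨fun k hk => ⟨le_rfl, (hP.1 k hk).1⟩, Or.inr ⟨i, hiC, hri, h0, hlater, h⟩⟩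
    by_cases hb0 : b ≤ 0
    · simp only [SchedModel.fwdInner, if_neg hC, if_neg hr, if_pos hb0, sub_zero,
        Finset.sum_const_zero]
      exact hidle (Or.inl (le_antisymm hb hb0))
    by_cases hw : j < M.t i ∨ M.d i < j
    · simp only [SchedModel.fwdInner, if_neg hC, if_neg hr, if_neg hb0, if_pos hw, sub_zero,
        Finset.sum_const_zero]
      exact hidle (Or.inr (hw.imp id Or.inl))
    by_cases hbuf : M.Bm < M.L * (((Finset.Icc 1 M.C).filter
        (fun i' => j < M.d i' ∧ (rem i' < X i' ∨ i' = i))).card : ℝ)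
    · simp only [SchedModel.fwdInner, if_neg hC, if_neg hr, if_neg hb0, if_neg hw, if_pos hbuf,
        sub_zero, Finset.sum_const_zero]
      exact hidle (Or.inr (Or.inr (Or.inr hbuf)))
    by_cases hbr : b < rem i
    · simp only [SchedModel.fwdInner, if_neg hC, if_neg hr, if_neg hb0, if_neg hw, if_neg hbuf,
        if_pos hbr]
      refine ⟨fun k hk => ?_, Or.inr ⟨i, hiC, ?_, fun k hk hki => ?_, fun k hk hik => ?_, ?_⟩⟩
      · by_cases hki : k = i
        · subst hki; simp [hb, hbr.le]
        · simp [hki, (hP.1 k hk).1]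
      · simpa using hbr
      · simp [hki.ne, h0 k hk hki]
      · simp [hik.ne', hlater k hk hik]
      · left
        rw [Finset.sum_ite_eq' _ i, if_pos hiC]
    · simp only [SchedModel.fwdInner, if_neg hC, if_neg hr, if_neg hb0, if_neg hw, if_neg hbuf,
        if_neg hbr]
      have hP' : M.PrefixState X (Function.update rem i 0) := by
        refine ⟨fun k hk => ?_, fun k hk k' hk' hkk hpos => ?_⟩
        · by_cases hki : k = i
          · subst hki
            simpa using (hP.1 k hk).1.trans (hP.1 k hk).2
          · simpa [hki] using hP.1 k hk
        · by_cases hki : k = i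
          · simp [hki] at hpos
          · rw [Function.update_of_ne hki] at hpos
            have hik : i < k := by
              by_contra hcon
              exact hpos.ne' (h0 k hk (by omega))
            rw [Function.update_of_ne (by omega)]
            exact hP.2 k hk k' hk' hkk hpos
      have h0' : ∀ k ∈ Finset.Icc 1 M.C, k < i + 1 → Function.update rem i 0 k = 0 := by
        intro k hk hki
        by_cases hki' : k = i
        · simp [hki']
        · rw [Function.update_of_ne hki']
          exact h0 k hk (by omega)
      obtain ⟨h1, h2⟩ := ih (i + 1) (b - rem i) (Function.update rem i 0) (by omega) (by omega)
        (by linarith [not_lt.1 hbr]) hP' h0'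
      set a := M.fwdInner X j fuel (i + 1) (b - rem i) (Function.update rem i 0) with ha
      have hupd : ∀ k, rem k - ((if k = i then rem i else 0) + a k)
          = Function.update rem i 0 k - a k := by
        intro k
        by_cases hki : k = i
        · subst hki; simp
        · simp [hki]
      refine ⟨fun k hk => ?_, ?_⟩
      · have hk1 := h1 k hk
        by_cases hki : k = i
        · subst hki
          simp only [Function.update_self] at hk1
          simp only [if_true]
          constructor <;> linarith
        · simpa [hki] using hk1
      · simp only [hupd]
        have hsum : ∑ k ∈ Finset.Icc 1 M.C, ((if k = i then rem i else 0) + a k)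
            = rem i + ∑ k ∈ Finset.Icc 1 M.C, a k := by
          rw [Finset.sum_add_distrib, Finset.sum_ite_eq' _ i, if_pos hiC]
        rw [hsum]
        rcases h2 with h2 | ⟨i', hi', hp, hlt, hgt, hbl⟩
        · exact Or.inl h2
        · refine Or.inr ⟨i', hi', hp, hlt, hgt, ?_⟩
          rcases hbl with hbl | hbl
          · left; linarith
          · right; exact hbl

theorem SchedModel.SlotEnd.prefixState {M : SchedModel} {X : ℕ → ℝ} {j : ℕ} {b s : ℝ}
    {rem : ℕ → ℝ} (h : M.SlotEnd X j b s rem)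
    (hr : ∀ k ∈ Finset.Icc 1 M.C, 0 ≤ rem k ∧ rem k ≤ X k) : M.PrefixState X rem := by
  refine ⟨hr, fun k hk k' hk' hkk hpos => ?_⟩
  rcases h with h | ⟨i, hi, -, hlt, hgt, -⟩
  · exact absurd (h k hk) hpos.ne'
  · refine hgt k' hk' (lt_of_le_of_lt ?_ hkk)
    by_contra hcon
    exact hpos.ne' (hlt k hk (by omega))

/-! ### Cumulative downloads of an in-order schedule -/

/-- A schedule that downloads nothing of chunk `k` after slot `τ` has completed it by `τ`. -/
theorem SchedModel.cum_eq_of_zero_after {M : SchedModel} {X : ℕ → ℝ} {z : ℕ → ℕ → ℝ}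
    (hz : M.IsSchedule X z) {k τ : ℕ} (hk : k ∈ Finset.Icc 1 M.C)
    (h : ∀ j, τ < j → z k j = 0) : ∑ j ∈ Finset.Icc 1 τ, z k j = X k := by
  rw [← hz.2.2.1 k hk]
  have h1 : ∑ j ∈ Finset.Icc 1 τ, z k j = ∑ j ∈ Finset.Icc 1 (max τ (M.d k)), z k j := by
    refine Finset.sum_subset (Finset.Icc_subset_Icc le_rfl (le_max_left _ _)) fun j hj hj' => ?_
    refine h j ?_
    simp only [Finset.mem_Icc] at hj hj'
    omega
  have h2 : ∑ j ∈ Finset.Icc 1 (M.d k), z k j = ∑ j ∈ Finset.Icc 1 (max τ (M.d k)), z k j := by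
    refine Finset.sum_subset (Finset.Icc_subset_Icc le_rfl (le_max_right _ _)) fun j hj hj' => ?_
    refine hz.2.1 k j (Or.inr ?_)
    simp only [Finset.mem_Icc] at hj hj'
    omega
  rw [h1, h2]

theorem SchedModel.cum_le {M : SchedModel} {X : ℕ → ℝ} {z : ℕ → ℕ → ℝ}
    (hz : M.IsSchedule X z) {k : ℕ} (τ : ℕ) (hk : k ∈ Finset.Icc 1 M.C) :
    ∑ j ∈ Finset.Icc 1 τ, z k j ≤ X k := by
  rcases le_total τ (M.d k) with h | h
  · rw [← hz.2.2.1 k hk]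
    exact Finset.sum_le_sum_of_subset_of_nonneg (Finset.Icc_subset_Icc le_rfl h)
      fun j _ _ => hz.1 k j
  · exact (cum_eq_of_zero_after hz hk fun j hj => hz.2.1 k j (Or.inr (by omega))).le

/-- An in-order schedule has completed every chunk preceding one it has started. -/
theorem SchedModel.cum_eq_of_later_pos {M : SchedModel} {X : ℕ → ℝ} {z : ℕ → ℕ → ℝ}
    (hz : M.IsSchedule X z) (hord : SchedModel.InOrder z) {k k' τ : ℕ}
    (hk : k ∈ Finset.Icc 1 M.C) (hkk : k < k') (hpos : 0 < ∑ j ∈ Finset.Icc 1 τ, z k' j) :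
    ∑ j ∈ Finset.Icc 1 τ, z k j = X k := by
  obtain ⟨j', hj', hzj⟩ := Finset.exists_lt_of_sum_lt
    (s := Finset.Icc 1 τ) (f := fun _ => (0 : ℝ)) (g := fun j => z k' j) (by simpa using hpos)
  refine cum_eq_of_zero_after hz hk fun j hj => ?_
  by_contra hne
  have := hord k k' j j' hkk (lt_of_le_of_ne (hz.1 k j) (Ne.symm hne)) hzj
  have := (Finset.mem_Icc.1 hj').2
  omega

/-! ### Dominance of the greedy -/

/-- One step of the dominance argument: if the greedy is no worse than the competitor `z` on every
chunk after slot `τ`, and slot `τ + 1` takes the remaining amounts from `rem` to `rem'`, then it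
is no worse after slot `τ + 1`. -/
theorem SchedModel.SlotEnd.dominates {M : SchedModel} {X : ℕ → ℝ} {z : ℕ → ℕ → ℝ}
    (hz : M.IsSchedule X z) (hord : SchedModel.InOrder z) {τ : ℕ} {rem rem' : ℕ → ℝ}
    (hdom : ∀ k ∈ Finset.Icc 1 M.C, rem k ≤ X k - ∑ j ∈ Finset.Icc 1 τ, z k j)
    (hle : ∀ k ∈ Finset.Icc 1 M.C, rem' k ≤ rem k)
    (hr' : ∀ k ∈ Finset.Icc 1 M.C, rem' k ≤ X k)
    (hend : M.SlotEnd X (τ + 1) (M.B (τ + 1)) (∑ k ∈ Finset.Icc 1 M.C, (rem k - rem' k)) rem') :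
    ∀ k ∈ Finset.Icc 1 M.C, rem' k ≤ X k - ∑ j ∈ Finset.Icc 1 (τ + 1), z k j := by
  rcases hend with h | ⟨i, hi, hpos, hlt, hgt, hbl⟩
  · intro k hk
    rw [h k hk]
    linarith [cum_le hz (τ + 1) hk]
  have hnn : ∀ k, 0 ≤ ∑ j ∈ Finset.Icc 1 (τ + 1), z k j :=
    fun k => Finset.sum_nonneg fun j _ => hz.1 k j
  by_contra! hcon
  obtain ⟨k, hk, hkbad⟩ := hcon
  -- The competitor being ahead anywhere forces it to be strictly ahead on the blocking chunk `i`.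
  have hik : i ≤ k := by
    by_contra hki
    rw [hlt k hk (by omega)] at hkbad
    linarith [cum_le hz (τ + 1) hk]
  have hibad : X i - ∑ j ∈ Finset.Icc 1 (τ + 1), z i j < rem' i := by
    rcases hik.eq_or_lt with rfl | hik
    · exact hkbad
    · rw [cum_eq_of_later_pos hz hord hi hik (by linarith [hr' k hk])]
      linarith
  have hipos : 0 < ∑ j ∈ Finset.Icc 1 (τ + 1), z i j := by linarith [hr' i hi]
  have hdone : ∀ k ∈ Finset.Icc 1 M.C, k < i → ∑ j ∈ Finset.Icc 1 (τ + 1), z k j = X k :=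
    fun k hk hki => cum_eq_of_later_pos hz hord hk hki hipos
  rcases hbl with hbl | hbl | hbl | hbl
  · -- Exhausted bandwidth: compare the total amounts.
    have hlt_sum : ∑ k ∈ Finset.Icc 1 M.C, (X k - ∑ j ∈ Finset.Icc 1 (τ + 1), z k j)
        < ∑ k ∈ Finset.Icc 1 M.C, rem' k := by
      refine Finset.sum_lt_sum (fun k hk => ?_) ⟨i, hi, hibad⟩
      rcases lt_trichotomy k i with h | rfl | h
      · rw [hlt k hk h, hdone k hk h, sub_self]
      · exact hibad.le
      · rw [hgt k hk h]
        linarith [hnn k]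
    have hsum_dom := Finset.sum_le_sum hdom
    have hB := hz.2.2.2.1 (τ + 1)
    simp only [Finset.sum_Icc_succ_top (Nat.le_add_left 1 τ), Finset.sum_sub_distrib,
      Finset.sum_add_distrib] at hlt_sum hsum_dom hbl
    linarith
  · -- Before its window the competitor cannot have started chunk `i`.
    refine hipos.ne' (Finset.sum_eq_zero fun j hj => hz.2.1 i j (Or.inl ?_))
    have := (Finset.mem_Icc.1 hj).2
    omega
  · -- After its window chunk `i` was already complete one slot earlier.
    have h := cum_eq_of_zero_after hz (τ := τ) hi fun j hj => hz.2.1 i j (Or.inr (by omega))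
    linarith [hdom i hi, hle i hi]
  · -- The competitor's buffer contains everything counted by the greedy.
    have hcard := Finset.card_le_card (s := (Finset.Icc 1 M.C).filter
        (fun i' => τ + 1 < M.d i' ∧ (rem' i' < X i' ∨ i' = i)))
      (t := (Finset.Icc 1 M.C).filter
        (fun i' => τ + 1 < M.d i' ∧ 0 < ∑ j ∈ Finset.Icc 1 (τ + 1), z i' j)) (by
      intro k hk
      simp only [Finset.mem_filter] at hk ⊢
      refine ⟨hk.1, hk.2.1, ?_⟩
      rcases hk.2.2 with hs | rfl
      · rcases lt_trichotomy k i with h | rfl | h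
        · rw [hdone k hk.1 h, ← hlt k hk.1 h]
          exact hs
        · exact hipos
        · exact absurd (hgt k hk.1 h) hs.ne
      · exact hipos)
    have hbuf := hz.2.2.2.2 (τ + 1)
    have := mul_le_mul_of_nonneg_left (Nat.cast_le (α := ℝ).2 hcard) M.hL.le
    linarith

/-- After every slot, the greedy has downloaded at least as much of every chunk as the competitor. -/
theorem SchedModel.fwdRem_state (M : SchedModel) (X : ℕ → ℝ) (hX : ∀ i, 0 ≤ X i)
    (z : ℕ → ℕ → ℝ) (hz : M.IsSchedule X z) (hord : SchedModel.InOrder z) (τ : ℕ) :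
    M.PrefixState X (M.fwdRem X τ) ∧
    ∀ k ∈ Finset.Icc 1 M.C, M.fwdRem X τ k ≤ X k - ∑ j ∈ Finset.Icc 1 τ, z k j := by
  induction τ with
  | zero =>
    have h : ∀ k ∈ Finset.Icc 1 M.C, M.fwdRem X 0 k = X k := fun k hk => by
      simp only [SchedModel.fwdRem, if_pos hk]
    refine ⟨⟨fun k hk => ?_, fun k _ k' hk' _ _ => h k' hk'⟩, fun k hk => ?_⟩
    · rw [h k hk]
      exact ⟨hX k, le_rfl⟩
    · rw [h k hk]
      simp
  | succ τ ih =>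
    obtain ⟨hP, hdom⟩ := ih
    obtain ⟨ha, hend⟩ := M.fwdInner_spec X (τ + 1) (M.C + 1) 1 (M.B (τ + 1)) (M.fwdRem X τ)
      le_rfl le_rfl (M.hB _) hP (fun k hk hk1 => by
        have := (Finset.mem_Icc.1 hk).1
        omega)
    change M.SlotEnd X _ _ _ (M.fwdRem X (τ + 1)) at hend
    have hrem : ∀ k, M.fwdRem X (τ + 1) k = M.fwdRem X τ k -
      M.fwdInner X (τ + 1) (M.C + 1) 1 (M.B (τ + 1)) (M.fwdRem X τ) k := fun k => rfl
    have hr' : ∀ k ∈ Finset.Icc 1 M.C, 0 ≤ M.fwdRem X (τ + 1) k ∧ M.fwdRem X (τ + 1) k ≤ X k := by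
      intro k hk
      rw [hrem]
      constructor <;> linarith [ha k hk, (hP.1 k hk).2]
    refine ⟨hend.prefixState hr', SchedModel.SlotEnd.dominates hz hord hdom (fun k hk => ?_)
      (fun k hk => (hr' k hk).2) ?_⟩
    · rw [hrem]
      linarith [(ha k hk).1]
    · simpa only [hrem, sub_sub_cancel] using hend

/-- Proposition 1: the forward greedy downloads every chunk starting
no later, and finishing no later, than any in-order feasible schedule with the same
per-chunk amounts. -/
theorem forward_greedy_earliest (M : SchedModel) (X : ℕ → ℝ) (hX : ∀ i, 0 ≤ X i)
    (z : ℕ → ℕ → ℝ) (hz : M.IsSchedule X z) (hord : SchedModel.InOrder z) :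
    ∀ i ∈ Finset.Icc 1 M.C,
      M.fwdFirst X i ≤ sInf {j | 0 < z i j} ∧
      M.fwdCompl X i ≤ sInf {j | ∑ j' ∈ Finset.Icc 1 j, z i j' = X i} := by
  intro i hi
  have hdom := fun τ => (M.fwdRem_state X hX z hz hord τ).2 i hi
  constructor
  · by_cases hne : {j | 0 < z i j}.Nonempty
    · have hmem := Nat.sInf_mem hne
      set s := sInf {j | 0 < z i j}
      change 0 < z i s at hmem
      have hs : 1 ≤ s := by
        by_contra hs
        exact hmem.ne' (hz.2.1 i s (Or.inl (by have := M.ht i; omega)))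
      have hpos : 0 < ∑ j ∈ Finset.Icc 1 s, z i j :=
        hmem.trans_le (Finset.single_le_sum (fun j _ => hz.1 i j) (Finset.mem_Icc.2 ⟨hs, le_rfl⟩))
      -- If the greedy downloaded nothing of `i` up to slot `s`, all of `X i` would remain.
      by_contra! hcon
      have hrem : ∀ τ ≤ s, X i ≤ M.fwdRem X τ i := by
        intro τ
        induction τ with
        | zero =>
          intro _
          simp only [SchedModel.fwdRem, if_pos hi, le_refl]
        | succ τ ih =>
          intro hτ
          have hnot : ¬ 0 < M.fwdAlloc X (τ + 1) i :=
            Nat.notMem_of_lt_sInf (s := {j | 0 < M.fwdAlloc X j i}) (lt_of_le_of_lt hτ hcon)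
          simp only [SchedModel.fwdAlloc, if_neg (Nat.succ_ne_zero τ), Nat.add_sub_cancel] at hnot
          simp only [SchedModel.fwdRem]
          linarith [ih (by omega)]
      linarith [hdom s, hrem s le_rfl]
    · -- Nothing of `i` is ever downloaded, so `X i = 0` and the greedy never touches `i` either.
      have hzero : ∀ j, z i j = 0 := fun j =>
        le_antisymm (not_lt.1 fun h => hne ⟨j, h⟩) (hz.1 i j)
      have hXi : X i = 0 := by
        rw [← hz.2.2.1 i hi]
        exact Finset.sum_eq_zero fun j _ => hzero j
      have hrem : ∀ τ, M.fwdRem X τ i = 0 := fun τ => by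
        have := (M.fwdRem_state X hX z hz hord τ).1.1 i hi
        exact le_antisymm (hXi ▸ this.2) this.1
      have hempty : {j | 0 < M.fwdAlloc X j i} = ∅ := by
        refine Set.eq_empty_iff_forall_notMem.2 fun j hj => ?_
        rcases j with _ | j
        · simp [SchedModel.fwdAlloc] at hj
        · simp only [Set.mem_ofPred_eq, SchedModel.fwdAlloc, if_neg (Nat.succ_ne_zero j),
            Nat.add_sub_cancel] at hj
          have h1 := hrem (j + 1)
          simp only [SchedModel.fwdRem] at h1
          linarith [hrem j]
      simp [SchedModel.fwdFirst, hempty]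
  · have hmem := Nat.sInf_mem (s := {j | ∑ j' ∈ Finset.Icc 1 j, z i j' = X i})
      ⟨M.d i, hz.2.2.1 i hi⟩
    refine Nat.sInf_le ?_
    rw [Set.mem_ofPred_eq] at hmem ⊢
    linarith [hdom (sInf {j | ∑ j' ∈ Finset.Icc 1 j, z i j' = X i})]
end

section
/- (Lemma 1) In the scheduling model with common chunk size X > 0, the backward greedy selection G is itself feasible, and |G| ≥ |S| for every feasible set S ⊆ {1,…,C}. Equivalently, the backward greedy selection achieves the minimum possible number of skipped chunks C − |G| among all feasible selections. -/
/-!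
The buffer constraint couples the chunks combinatorially, but for a common chunk size it can be
removed by serving chunks in index order. Write `D_S(τ)` and `T_S(τ)` for the number of `i ∈ S` with
`d i ≤ τ`, respectively `t i ≤ τ`, and let `K = ⌊Bm / L⌋`. A set `S` is feasible if and only if there
is a cumulative download curve `W` with `W 0 = 0`, increments in `[0, B]`, and
`X · D_S ≤ W ≤ X · min (T_S, K + D_S)` (`SchedModel.IsProfile`). The total download of a schedule
gives such a curve (`SchedModel.exists_profile`); conversely, downloading the chunks of `S` one after
the other along `W` is a schedule (`SchedModel.feasible_of_profile`), because at each time it starts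
the least possible number of chunks.

The exchange step (`SchedModel.exchange`) is as follows. Let `S = A ∪ {a} ∪ G` be feasible with
`A < a < i < G`, and let `H = {i} ∪ G` be feasible. Put `S' = A ∪ {i} ∪ G`. As `t` and `d` are
nondecreasing, `D_{S'} = min (D_S, |A| + D_H)` and `T_{S'} = min (T_S, |A| + T_H)`, so
`min (W_S, X |A| + W_H)` is a curve for `S'`. Hence any feasible set can be transformed, without
losing cardinality, into one that agrees with the greedy selection on each final segment of chunks
(`SchedModel.greedy_invariant`).
-/

open scoped Classical

/-- With common chunk size `X`, a set `S` of chunks is feasible if there is a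
schedule downloading amount `X` for every chunk in `S` and `0` otherwise. -/
def SchedModel.FeasibleSet (M : SchedModel) (X : ℝ) (S : Finset ℕ) : Prop :=
  ∃ z : ℕ → ℕ → ℝ, M.IsSchedule (fun i => if i ∈ S then X else 0) z

/-- Backward greedy selection after processing the `k` chunks `C, C−1, …, C−k+1`:
a chunk is added iff the selection so far together with it is feasible. -/
noncomputable def SchedModel.backGreedyAux (M : SchedModel) (X : ℝ) : ℕ → Finset ℕ
  | 0 => ∅
  | k + 1 =>
    let G := M.backGreedyAux X k
    if M.FeasibleSet X (insert (M.C - k) G) then insert (M.C - k) G else G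

/-- The backward greedy selection (chunks processed in decreasing order C,…,1). -/
noncomputable def SchedModel.backGreedy (M : SchedModel) (X : ℝ) : Finset ℕ :=
  M.backGreedyAux X M.C

open Finset

/-! ### Profiles -/

/-- The number of elements `i` of `S` with `f i ≤ τ`. -/
noncomputable def countLE (f : ℕ → ℕ) (S : Finset ℕ) (τ : ℕ) : ℕ := #{i ∈ S | f i ≤ τ}

/-- The number of elements of `S` below `i`. -/
noncomputable def rankIn (S : Finset ℕ) (i : ℕ) : ℕ := #{k ∈ S | k < i}

/-- `W τ` is an admissible total amount downloaded up to slot `τ`, for the chunk set `S`: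
every expired chunk is complete, and the number of chunks that must have been started is bounded
both by the number of released chunks and by the expired ones plus the buffer size in chunks. -/
structure SchedModel.IsProfile (M : SchedModel) (X : ℝ) (S : Finset ℕ) (W : ℕ → ℝ) : Prop where
  zero : W 0 = 0
  mono : ∀ j, W j ≤ W (j + 1)
  cap : ∀ j, W (j + 1) ≤ W j + M.B (j + 1)
  lower : ∀ τ, X * countLE M.d S τ ≤ W τ
  upper : ∀ τ, W τ ≤ X * countLE M.t S τ
  buffer : ∀ τ, W τ ≤ X * (⌊M.Bm / M.L⌋₊ + countLE M.d S τ : ℕ)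

lemma SchedModel.buffer_iff (M : SchedModel) (n : ℕ) :
    M.L * (n : ℝ) ≤ M.Bm ↔ n ≤ ⌊M.Bm / M.L⌋₊ := by
  rw [Nat.le_floor_iff (div_nonneg M.hBm.le M.hL.le), le_div_iff₀ M.hL, mul_comm]

lemma SchedModel.exists_profile (M : SchedModel) {X : ℝ} (hX : 0 < X) {S : Finset ℕ}
    (hS : S ⊆ Icc 1 M.C) (h : M.FeasibleSet X S) : ∃ W, M.IsProfile X S W := by
  obtain ⟨z, hz, hwin, hsum, hcap, hbuf⟩ := h
  set y : ℕ → ℕ → ℝ := fun i τ => ∑ j ∈ Icc 1 τ, z i j with hy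
  have y_nonneg : ∀ i τ, 0 ≤ y i τ := fun i τ => sum_nonneg fun j _ => hz i j
  have y_mono : ∀ i, Monotone (y i) := fun i a b hab =>
    sum_le_sum_of_subset_of_nonneg (Icc_subset_Icc_right hab) fun j _ _ => hz i j
  have y_late : ∀ i τ, M.d i ≤ τ → y i τ = y i (M.d i) := fun i τ hτ => by
    symm
    apply sum_subset (Icc_subset_Icc_right hτ)
    intro j hj hj'
    apply hwin
    simp only [mem_Icc] at hj hj'
    omega
  have y_early : ∀ i τ, τ < M.t i → y i τ = 0 := fun i τ hτ => by
    apply sum_eq_zero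
    intro j hj
    apply hwin
    simp only [mem_Icc] at hj
    omega
  have y_le : ∀ i τ, y i τ ≤ y i (M.d i) := fun i τ => by
    rcases le_total (M.d i) τ with h | h
    · exact (y_late i τ h).le
    · exact y_mono i h
  have y_mem : ∀ i ∈ S, y i (M.d i) = X := fun i hi => by
    have := hsum i (hS hi)
    simpa [hi] using this
  have y_not : ∀ i ∈ Icc 1 M.C, i ∉ S → ∀ τ, y i τ = 0 := fun i hi hiS τ => by
    have h1 : y i (M.d i) = 0 := by
      have := hsum i hi
      simpa [hiS] using this
    exact le_antisymm (h1 ▸ y_le i τ) (y_nonneg i τ)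
  have tot : ∀ τ, ∑ i ∈ Icc 1 M.C, y i τ = ∑ i ∈ S, y i τ := fun τ =>
    (sum_subset hS fun i hi hiS => y_not i hi hiS τ).symm
  have step : ∀ i j, y i (j + 1) = y i j + z i (j + 1) := fun i j =>
    sum_Icc_succ_top (by omega) _
  refine ⟨fun τ => ∑ i ∈ Icc 1 M.C, y i τ, ?_, ?_, ?_, ?_, ?_, ?_⟩
  · simp [hy]
  · exact fun j => sum_le_sum fun i _ => y_mono i (Nat.le_succ j)
  · intro j
    simp only [step, sum_add_distrib]
    linarith [hcap (j + 1)]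
  · intro τ
    rw [tot, countLE, mul_comm, ← nsmul_eq_mul, ← sum_const, sum_filter]
    refine sum_le_sum fun i hi => ?_
    split_ifs with h
    · rw [y_late i τ h, y_mem i hi]
    · exact y_nonneg i τ
  · intro τ
    rw [tot, countLE, mul_comm, ← nsmul_eq_mul, ← sum_const, sum_filter]
    refine sum_le_sum fun i hi => ?_
    split_ifs with h
    · exact y_mem i hi ▸ y_le i τ
    · exact (y_early i τ (not_le.mp h)).le
  · intro τ
    have hK := (M.buffer_iff _).1 (hbuf τ)
    have hsub : #{i ∈ S | τ < M.d i ∧ 0 < y i τ} ≤ ⌊M.Bm / M.L⌋₊ :=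
      (card_le_card (filter_subset_filter _ hS)).trans hK
    have key : ∑ i ∈ S, y i τ ≤
        X * (#{i ∈ S | τ < M.d i ∧ 0 < y i τ} + countLE M.d S τ : ℕ) := by
      rw [countLE, Nat.cast_add, mul_add, mul_comm, ← nsmul_eq_mul, ← sum_const, sum_filter,
        mul_comm, ← nsmul_eq_mul, ← sum_const, sum_filter, ← sum_add_distrib]
      refine sum_le_sum fun i hi => ?_
      have h1 := y_le i τ
      rw [y_mem i hi] at h1
      by_cases hd : M.d i ≤ τ
      · simp [hd, not_lt.mpr hd, h1]
      · by_cases hp : 0 < y i τ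
        · simp [hd, not_le.mp hd, hp, h1]
        · simp [hd, hp, not_lt.mp hp]
    simp only [tot]
    refine key.trans (mul_le_mul_of_nonneg_left ?_ hX.le)
    exact_mod_cast Nat.add_le_add_right hsub _

/-! ### First-in-first-out schedules -/

/-- The ranks of the elements of `S` are exactly `0, …, #S - 1`. -/
lemma sum_rankIn {α : Type*} [AddCommMonoid α] (f : ℕ → α) (S : Finset ℕ) :
    ∑ i ∈ S, f (rankIn S i) = ∑ r ∈ range #S, f r := by
  induction S using Finset.induction_on_max with
  | empty => simp
  | insert m S hm ih =>
    have hmS : m ∉ S := fun h => lt_irrefl _ (hm m h)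
    rw [sum_insert hmS, card_insert_of_notMem hmS, sum_range_succ, add_comm, ← ih]
    congr 1
    · refine sum_congr rfl fun i hi => ?_
      simp [rankIn, filter_insert, not_lt.mpr (hm i hi).le]
    · simp only [rankIn, filter_insert, lt_irrefl, if_false]
      rw [filter_true_of_mem hm]

lemma sum_clamp {X : ℝ} (hX : 0 < X) {w : ℝ} (hw : 0 ≤ w) (n : ℕ) :
    ∑ r ∈ range n, max 0 (min X (w - X * r)) = min w (X * n) := by
  induction n with
  | zero => simp [hw]
  | succ n ih =>
    rw [sum_range_succ, ih]
    push_cast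
    rcases le_total w (X * n) with h | h
    · rw [min_eq_left h, min_eq_left (by linarith : w ≤ X * (n + 1)), min_eq_right (by linarith),
        max_eq_left (by linarith), add_zero]
    · rw [min_eq_right h]
      rcases le_total w (X * (n + 1)) with h' | h'
      · rw [min_eq_left h', min_eq_right (by linarith), max_eq_right (by linarith)]
        ring
      · rw [min_eq_right h', min_eq_left (by linarith), max_eq_right hX.le]
        ring

lemma SchedModel.feasible_of_profile (M : SchedModel) {X : ℝ} (hX : 0 < X) {S : Finset ℕ}
    (hS : S ⊆ Icc 1 M.C) {W : ℕ → ℝ} (h : M.IsProfile X S W) : M.FeasibleSet X S := by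
  have Wmono : Monotone W := monotone_nat_of_le_succ h.mono
  -- `Z i τ` is the part of chunk `i` downloaded up to slot `τ` in the first-in-first-out order.
  set Z : ℕ → ℕ → ℝ := fun i τ => max 0 (min X (W τ - X * rankIn S i)) with hZ
  have Zmono : ∀ i, Monotone (Z i) := fun i a b hab =>
    max_le_max le_rfl (min_le_min le_rfl (sub_le_sub_right (Wmono hab) _))
  have Zearly : ∀ i τ, τ < M.t i → Z i τ = 0 := fun i τ hτ => by
    have h1 : countLE M.t S τ ≤ rankIn S i := by
      refine card_le_card (monotone_filter_right _ fun k _ hk => ?_)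
      by_contra hik
      exact absurd (M.tmono (not_lt.mp hik)) (by omega)
    have h2 : X * (countLE M.t S τ : ℝ) ≤ X * rankIn S i :=
      mul_le_mul_of_nonneg_left (by exact_mod_cast h1) hX.le
    exact max_eq_left ((min_le_right _ _).trans (by linarith [h.upper τ]))
  have rank_lt : ∀ i ∈ S, ∀ τ, M.d i ≤ τ → rankIn S i + 1 ≤ countLE M.d S τ := fun i hi τ hτ => by
    have h1 : rankIn S i + 1 = #(insert i {k ∈ S | k < i}) := by
      rw [card_insert_of_notMem (by simp), rankIn]
    rw [h1]
    refine card_le_card fun k hk => ?_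
    simp only [mem_insert, mem_filter] at hk ⊢
    rcases hk with rfl | ⟨hk, hki⟩
    · exact ⟨hi, hτ⟩
    · exact ⟨hk, (M.dmono hki.le).trans hτ⟩
  have Zlate : ∀ i ∈ S, ∀ τ, M.d i ≤ τ → Z i τ = X := fun i hi τ hτ => by
    have h2 : X * ((rankIn S i : ℝ) + 1) ≤ X * countLE M.d S τ :=
      mul_le_mul_of_nonneg_left (by exact_mod_cast rank_lt i hi τ hτ) hX.le
    have h3 : X ≤ W τ - X * rankIn S i := by linarith [h.lower τ]
    simp only [hZ, min_eq_left h3, max_eq_right hX.le]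
  have Ztot : ∀ τ, ∑ i ∈ S, Z i τ = W τ := fun τ => by
    rw [hZ, sum_rankIn (fun r : ℕ => max 0 (min X (W τ - X * r))) S,
      sum_clamp hX (h.zero ▸ Wmono (Nat.zero_le τ)), min_eq_left]
    refine (h.upper τ).trans (mul_le_mul_of_nonneg_left ?_ hX.le)
    exact_mod_cast card_le_card (filter_subset _ _)
  set z : ℕ → ℕ → ℝ := fun i j => if i ∈ S then Z i j - Z i (j - 1) else 0 with hz
  have zsum : ∀ i ∈ S, ∀ τ, ∑ j ∈ Icc 1 τ, z i j = Z i τ := fun i hi τ => by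
    induction τ with
    | zero => simpa using (Zearly i 0 (M.ht i)).symm
    | succ τ ih =>
      rw [sum_Icc_succ_top (by omega), ih]
      simp [hz, hi]
  have zsum' : ∀ i ∉ S, ∀ τ, ∑ j ∈ Icc 1 τ, z i j = 0 := fun i hi τ => by simp [hz, hi]
  refine ⟨z, ?_, ?_, ?_, ?_, ?_⟩
  · intro i j
    simp only [hz]
    split_ifs
    · exact sub_nonneg.mpr (Zmono i (Nat.sub_le j 1))
    · exact le_rfl
  · intro i j hj
    simp only [hz]
    split_ifs with hi
    · rcases hj with hj | hj
      · rw [Zearly i j hj, Zearly i (j - 1) (by omega), sub_zero]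
      · rw [Zlate i hi j hj.le, Zlate i hi (j - 1) (by omega), sub_self]
    · rfl
  · intro i _
    by_cases hi : i ∈ S
    · simp only [zsum i hi, Zlate i hi _ le_rfl, if_pos hi]
    · simp only [zsum' i hi, if_neg hi]
  · intro j
    have : ∑ i ∈ Icc 1 M.C, z i j = W j - W (j - 1) := by
      rw [← Ztot, ← Ztot, ← sum_sub_distrib, ← sum_subset hS fun i _ hi => by simp [hz, hi]]
      exact sum_congr rfl fun i hi => by simp [hz, hi]
    rw [this]
    rcases j with _ | j
    · simpa using M.hB 0
    · simpa using by linarith [h.cap j]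
  · intro τ
    rw [M.buffer_iff]
    set N := ⌊M.Bm / M.L⌋₊ + countLE M.d S τ with hN
    have hF : #{i ∈ S | rankIn S i < N} ≤ N := by
      rw [card_filter, sum_rankIn (fun r => if r < N then 1 else 0), ← card_filter]
      calc _ ≤ #(range N) := card_le_card fun r hr => by simp at hr ⊢; exact hr.2
        _ = N := card_range N
    -- Expired chunks and buffered chunks are disjoint, and all of them have rank below `N`.
    have hdisj : Disjoint {i ∈ S | M.d i ≤ τ}
        {i ∈ Icc 1 M.C | τ < M.d i ∧ 0 < ∑ j ∈ Icc 1 τ, z i j} := by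
      rw [disjoint_left]
      intro i h1 h2
      simp only [mem_filter] at h1 h2
      omega
    have hsub : {i ∈ S | M.d i ≤ τ} ∪ {i ∈ Icc 1 M.C | τ < M.d i ∧ 0 < ∑ j ∈ Icc 1 τ, z i j}
        ⊆ {i ∈ S | rankIn S i < N} := by
      intro i hi
      rw [mem_union, mem_filter, mem_filter] at hi
      rw [mem_filter]
      rcases hi with ⟨hi, hd⟩ | ⟨-, hd, hp⟩
      · exact ⟨hi, by have := rank_lt i hi τ hd; omega⟩
      · by_cases hi : i ∈ S
        · refine ⟨hi, ?_⟩
          rw [zsum i hi] at hp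
          simp only [hZ, lt_max_iff, lt_irrefl, false_or, lt_min_iff] at hp
          have h1 : X * (rankIn S i : ℝ) < X * (N : ℝ) := by linarith [h.buffer τ, hp.2]
          exact_mod_cast lt_of_mul_lt_mul_left h1 hX.le
        · rw [zsum' i hi] at hp
          exact absurd hp (lt_irrefl _)
    have := (card_le_card hsub).trans hF
    rw [card_union_of_disjoint hdisj] at this
    simp only [countLE] at hN
    omega

/-! ### The exchange step -/

/-- For sets `A < a < i < G` and nondecreasing `f`, exchanging `a` for `i` in `A ∪ {a} ∪ G` turns
the counting function into the minimum of the old one and the shifted one of `{i} ∪ G`. -/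
lemma countLE_exchange {f : ℕ → ℕ} (hf : Monotone f) {A G : Finset ℕ} {a i : ℕ}
    (hA : ∀ x ∈ A, x < a) (hai : a < i) (hG : ∀ x ∈ G, i < x) (τ : ℕ) :
    countLE f (insert i (A ∪ G)) τ =
      min (countLE f (insert a (A ∪ G)) τ) (#A + countLE f (insert i G) τ) := by
  have hdisj : Disjoint A G := disjoint_left.mpr fun x h1 h2 => by
    have := hA x h1; have := hG x h2; omega
  have haG : a ∉ G := fun h => by have := hG a h; omega
  have haA : a ∉ A := fun h => lt_irrefl _ (hA a h)
  have hiG : i ∉ G := fun h => lt_irrefl _ (hG i h)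
  have hiA : i ∉ A := fun h => by have := hA i h; omega
  have hle : countLE f A τ ≤ #A := card_le_card (filter_subset _ _)
  have hun : countLE f (A ∪ G) τ = countLE f A τ + countLE f G τ := by
    simp only [countLE, filter_union]
    exact card_union_of_disjoint (disjoint_filter_filter hdisj)
  have hins : ∀ (x : ℕ) (U : Finset ℕ), x ∉ U →
      countLE f (insert x U) τ = countLE f U τ + if f x ≤ τ then 1 else 0 := fun x U hx => by
    simp only [countLE, filter_insert]
    split_ifs
    · rw [card_insert_of_notMem (by simp [hx])]
    · rfl
  rw [hins i _ (by simp [hiA, hiG]), hins a _ (by simp [haA, haG]), hins i _ hiG, hun]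
  have hfi := hf hai.le
  by_cases ha : f a ≤ τ
  · have hall : countLE f A τ = #A := by
      simp only [countLE]
      rw [filter_true_of_mem fun x hx => (hf (hA x hx).le).trans ha]
    rw [hall]
    split_ifs <;> omega
  · split_ifs <;> omega

lemma SchedModel.exchange (M : SchedModel) {X : ℝ} (hX : 0 < X) {A G : Finset ℕ} {a i : ℕ}
    (hA : ∀ x ∈ A, x < a) (hai : a < i) (hG : ∀ x ∈ G, i < x)
    (hS : insert a (A ∪ G) ⊆ Icc 1 M.C) (hi : i ∈ Icc 1 M.C)
    (h1 : M.FeasibleSet X (insert a (A ∪ G))) (h2 : M.FeasibleSet X (insert i G)) :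
    M.FeasibleSet X (insert i (A ∪ G)) := by
  have hAG : A ∪ G ⊆ Icc 1 M.C := (subset_insert _ _).trans hS
  obtain ⟨W, hW⟩ := M.exists_profile hX hS h1
  obtain ⟨V, hV⟩ := M.exists_profile hX
    (insert_subset hi (subset_union_right.trans hAG)) h2
  refine M.feasible_of_profile hX (insert_subset hi hAG)
    (W := fun τ => min (W τ) (X * #A + V τ)) ⟨?_, ?_, ?_, ?_, ?_, ?_⟩
  · simp only [hW.zero, hV.zero]
    exact min_eq_left (by positivity)
  · exact fun j => min_le_min (hW.mono j) (by linarith [hV.mono j])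
  · intro j
    simp only [← min_add_add_right]
    exact min_le_min (hW.cap j) (by linarith [hV.cap j])
  · intro τ
    rw [countLE_exchange M.dmono hA hai hG, Nat.cast_min, mul_min_of_nonneg _ _ hX.le]
    push_cast
    exact min_le_min (hW.lower τ) (by linarith [hV.lower τ])
  · intro τ
    rw [countLE_exchange M.tmono hA hai hG, Nat.cast_min, mul_min_of_nonneg _ _ hX.le]
    push_cast
    exact min_le_min (hW.upper τ) (by linarith [hV.upper τ])
  · intro τ
    rw [countLE_exchange M.dmono hA hai hG, ← min_add_add_left, Nat.cast_min,
      mul_min_of_nonneg _ _ hX.le]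
    have := hV.buffer τ
    push_cast at this ⊢
    refine min_le_min ?_ (by linarith)
    simpa using hW.buffer τ

/-! ### The greedy selection -/

lemma SchedModel.feasible_empty (M : SchedModel) (X : ℝ) : M.FeasibleSet X ∅ :=
  ⟨fun _ _ => 0, by simp, by simp, by simp, by simp [M.hB], by simp [M.hBm.le]⟩

lemma SchedModel.FeasibleSet.mono {M : SchedModel} {X : ℝ} {S U : Finset ℕ}
    (h : M.FeasibleSet X S) (hU : U ⊆ S) : M.FeasibleSet X U := by
  obtain ⟨z, hz, hwin, hsum, hcap, hbuf⟩ := h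
  have hle : ∀ i j, (if i ∈ U then z i j else 0) ≤ z i j := fun i j => by
    split_ifs
    · exact le_rfl
    · exact hz i j
  refine ⟨fun i j => if i ∈ U then z i j else 0, ?_, ?_, ?_, ?_, ?_⟩
  · intro i j
    dsimp only
    split_ifs
    · exact hz i j
    · exact le_rfl
  · intro i j hj
    simp [hwin i j hj]
  · intro i hi
    by_cases hiU : i ∈ U
    · simpa [hiU, hU hiU] using hsum i hi
    · simp [hiU]
  · exact fun j => (sum_le_sum fun i _ => hle i j).trans (hcap j)
  · intro τ
    refine le_trans (mul_le_mul_of_nonneg_left ?_ M.hL.le) (hbuf τ)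
    refine Nat.cast_le.mpr (card_le_card (monotone_filter_right _ fun i _ hi => ?_))
    exact ⟨hi.1, hi.2.trans_le (sum_le_sum fun j _ => hle i j)⟩

/-- After `k` steps, every feasible set can be replaced by one that is at least as large and whose
elements above `C - k` are exactly those selected by the greedy procedure so far. -/
lemma SchedModel.greedy_invariant (M : SchedModel) {X : ℝ} (hX : 0 < X) (k : ℕ) (hk : k ≤ M.C) :
    M.FeasibleSet X (M.backGreedyAux X k) ∧
    ∀ S : Finset ℕ, S ⊆ Icc 1 M.C → M.FeasibleSet X S → ∃ U ⊆ Icc 1 M.C,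
      M.FeasibleSet X U ∧ #S ≤ #U ∧ {x ∈ U | M.C - k < x} = M.backGreedyAux X k := by
  induction k with
  | zero =>
    refine ⟨M.feasible_empty X, fun S hS hf => ⟨S, hS, hf, le_rfl, ?_⟩⟩
    refine filter_eq_empty_iff.mpr fun x hx => ?_
    have := mem_Icc.mp (hS hx)
    omega
  | succ k ih =>
    obtain ⟨hG, ih⟩ := ih (by omega)
    set G := M.backGreedyAux X k with hGdef
    set i := M.C - k with hi
    have hrec : M.backGreedyAux X (k + 1) =
        if M.FeasibleSet X (insert i G) then insert i G else G := rfl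
    have hiC : i ∈ Icc 1 M.C := mem_Icc.mpr (by omega)
    refine ⟨?_, fun S hS hf => ?_⟩
    · rw [hrec]
      split_ifs with h
      · exact h
      · exact hG
    obtain ⟨U, hU, hUf, hcard, hUG⟩ := ih S hS hf
    have hGi : ∀ x ∈ G, i < x := fun x hx => by
      rw [← hUG] at hx
      exact (mem_filter.mp hx).2
    have hGU : G ⊆ U := hUG ▸ filter_subset _ _
    have hmemG : ∀ x, x ∈ U → i < x → x ∈ G := fun x hx hix =>
      hUG ▸ mem_filter.mpr ⟨hx, hix⟩
    have hpred : ∀ x, M.C - (k + 1) < x ↔ x = i ∨ i < x := fun x => by omega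
    by_cases hiU : i ∈ U
    · refine ⟨U, hU, hUf, hcard, ?_⟩
      rw [hrec, if_pos (hUf.mono (insert_subset hiU hGU))]
      ext x
      simp only [mem_filter, hpred, mem_insert]
      grind
    by_cases hacc : M.FeasibleSet X (insert i G)
    swap
    · refine ⟨U, hU, hUf, hcard, ?_⟩
      rw [hrec, if_neg hacc]
      ext x
      simp only [mem_filter, hpred]
      grind
    rw [hrec, if_pos hacc]
    have hiG : i ∉ G := fun h => lt_irrefl _ (hGi i h)
    rcases {x ∈ U | x < i}.eq_empty_or_nonempty with hE | hE
    · have hUeq : U ⊆ G := fun x hx => by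
        have : x ∉ {x ∈ U | x < i} := by simp [hE]
        simp only [mem_filter, not_and, not_lt] at this
        have hxi : x ≠ i := fun h => hiU (h ▸ hx)
        exact hmemG x hx (by have := this hx; omega)
      refine ⟨insert i G, insert_subset hiC (hGU.trans hU), hacc, ?_, ?_⟩
      · exact hcard.trans (card_le_card (hUeq.trans (subset_insert _ _)))
      · refine filter_true_of_mem fun x hx => (hpred x).mpr ?_
        rcases mem_insert.mp hx with h | h
        · exact Or.inl h
        · exact Or.inr (hGi x h)
    · obtain ⟨a, haE, hmax⟩ := exists_max_image _ id hE
      obtain ⟨haU, hai⟩ := mem_filter.mp haE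
      set A : Finset ℕ := {x ∈ U | x < a} with hAdef
      have hA : ∀ x ∈ A, x < a := fun x hx => (mem_filter.mp hx).2
      have hUeq : U = insert a (A ∪ G) := by
        ext x
        simp only [mem_insert, mem_union, hAdef, mem_filter]
        constructor
        · intro hx
          have hxi : x ≠ i := fun h => hiU (h ▸ hx)
          rcases lt_or_gt_of_ne hxi with h | h
          · have : x ≤ a := hmax x (mem_filter.mpr ⟨hx, h⟩)
            rcases this.lt_or_eq with h' | h'
            · exact Or.inr (Or.inl ⟨hx, h'⟩)
            · exact Or.inl h'
          · exact Or.inr (Or.inr (hmemG x hx h))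
        · rintro (rfl | h | h)
          · exact haU
          · exact h.1
          · exact hGU h
      have haAG : a ∉ A ∪ G := fun h => by
        rcases mem_union.mp h with h | h
        · exact lt_irrefl _ (hA a h)
        · have := hGi a h; omega
      have hiAG : i ∉ A ∪ G := fun h => by
        rcases mem_union.mp h with h | h
        · have := hA i h; omega
        · exact hiG h
      refine ⟨insert i (A ∪ G), ?_, ?_, ?_, ?_⟩
      · exact insert_subset hiC (((subset_insert a _).trans hUeq.ge).trans hU)
      · exact M.exchange hX hA hai hGi (hUeq ▸ hU) hiC (hUeq ▸ hUf) hacc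
      · rw [hUeq, card_insert_of_notMem haAG] at hcard
        rwa [card_insert_of_notMem hiAG]
      · ext x
        simp only [mem_filter, hpred, mem_insert, mem_union]
        constructor
        · rintro ⟨h | h | h, h'⟩
          · exact Or.inl h
          · have := hA x h; omega
          · exact Or.inr h
        · rintro (h | h)
          · exact ⟨Or.inl h, Or.inl h⟩
          · exact ⟨Or.inr (Or.inr h), Or.inr (hGi x h)⟩

/-- Lemma 1: the backward greedy selection is feasible and maximizes
the number of fetched chunks, equivalently minimizes the number of skipped chunks,
among all feasible selections. -/
theorem backward_greedy_min_skips (M : SchedModel) (X : ℝ) (hX : 0 < X) :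
    M.FeasibleSet X (M.backGreedy X) ∧
    (∀ S : Finset ℕ, S ⊆ Finset.Icc 1 M.C → M.FeasibleSet X S →
      S.card ≤ (M.backGreedy X).card) ∧
    (∀ S : Finset ℕ, S ⊆ Finset.Icc 1 M.C → M.FeasibleSet X S →
      M.C - (M.backGreedy X).card ≤ M.C - S.card) := by
  obtain ⟨hG, hinv⟩ := M.greedy_invariant hX M.C le_rfl
  have hcard : ∀ S : Finset ℕ, S ⊆ Finset.Icc 1 M.C → M.FeasibleSet X S →
      S.card ≤ (M.backGreedy X).card := fun S hS hf => by
    obtain ⟨U, hU, -, hSU, hUG⟩ := hinv S hS hf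
    rw [SchedModel.backGreedy, ← hUG, filter_true_of_mem]
    · exact hSU
    · intro x hx
      have := mem_Icc.mp (hU hx)
      omega
  exact ⟨hG, hcard, fun S hS hf => Nat.sub_le_sub_left (hcard S hS hf) _⟩
end

section
/- In the scheduling model with common chunk size X > 0, the backward greedy selection G dominates every feasible selection on every suffix: for every feasible set S ⊆ {1,…,C} and every index i ∈ {1,…,C}, |S ∩ {i, i+1, …, C}| ≤ |G ∩ {i, i+1, …, C}|. -/
/-!
Feasibility of a set `S` of equal-size chunks is equivalent to a Hall-type counting condition.
With `K = ⌊Bm / L⌋` the number of chunks that fit into the buffer, `S` is feasible iff for all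
slots `τ, σ`

* `X * #{i ∈ S : τ < d i ≤ σ} ≤ B(τ, σ] + X * K`, and
* `X * #{i ∈ S : τ < t i, d i ≤ σ} ≤ B(τ, σ]`,

where `B(τ, σ]` is the total bandwidth of the slots `τ+1, …, σ` (`hallCond_of_feasible`,
`feasible_of_hallCond`). Necessity is counting. For sufficiency every chunk is downloaded as late
as possible, higher indices last: let `W τ` be the largest amount of work that can be done in the
slots after `τ` when only the deadlines are respected (`lateWork`, given by a min-formula), put
the chunks of `S` on the work axis in decreasing order of index, and let slot `j` serve the piece
`[W j, W (j-1)]` of that axis. Since windows are agreeable, at each time at most one chunk is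
partially served, so this schedule keeps the fewest chunks in the buffer.

The counting condition gives an exchange property (`exchange`): if `S` is feasible, `m ∉ S`, `s`
is the largest element of `S` below `m`, and `{m} ∪ (S ∩ (m, ∞))` is feasible, then `S - s + m`
is feasible. Indeed an interval which counts `m` but not `s` counts no element of `S` below `m`
at all. The theorem follows by exchanging the elements of `S` one at a time, from the top, until
the set agrees with the greedy selection; no exchange decreases a suffix count, and at the top
disagreement the chunk cannot lie in `S` only, as greedy would have taken it.
-/

open scoped Classical

namespace SchedModel

open Finset

/-! ### The counting condition -/

/-- The number of chunks that fit into the playback buffer. -/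
noncomputable def cap (M : SchedModel) : ℕ := ⌊M.Bm / M.L⌋₊

lemma le_cap_iff (M : SchedModel) (n : ℕ) : n ≤ M.cap ↔ M.L * (n : ℝ) ≤ M.Bm := by
  unfold cap
  rw [Nat.le_floor_iff (div_nonneg M.hBm.le M.hL.le), le_div_iff₀ M.hL, mul_comm]

/-- The Hall-type counting condition on a set of chunks: the first family of inequalities
expresses the buffer constraint, the second the download windows. -/
def HallCond (M : SchedModel) (X : ℝ) (S : Finset ℕ) : Prop :=
  (∀ τ σ, X * #{i ∈ S | τ < M.d i ∧ M.d i ≤ σ} ≤ ∑ j ∈ Ioc τ σ, M.B j + X * M.cap) ∧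
  (∀ τ σ, X * #{i ∈ S | τ < M.t i ∧ M.d i ≤ σ} ≤ ∑ j ∈ Ioc τ σ, M.B j)

lemma HallCond.mono {M : SchedModel} {X : ℝ} (hX : 0 < X) {S T : Finset ℕ} (hTS : T ⊆ S)
    (h : M.HallCond X S) : M.HallCond X T := by
  refine ⟨fun τ σ => le_trans ?_ (h.1 τ σ), fun τ σ => le_trans ?_ (h.2 τ σ)⟩ <;> gcongr

/-- Chunks downloaded entirely within the slots `τ+1, …, σ` fit into the bandwidth there. -/
lemma IsSchedule.card_mul_le {M : SchedModel} {X : ℝ} {x : ℕ → ℝ} {z : ℕ → ℕ → ℝ}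
    (hz : M.IsSchedule x z) {T : Finset ℕ} (hT : T ⊆ Icc 1 M.C) (τ σ : ℕ)
    (h : ∀ i ∈ T, ∑ j ∈ Ioc τ σ, z i j = X) : X * #T ≤ ∑ j ∈ Ioc τ σ, M.B j := by
  obtain ⟨h0, -, -, hcap, -⟩ := hz
  calc X * #T = ∑ i ∈ T, ∑ j ∈ Ioc τ σ, z i j := by
        rw [Finset.sum_congr rfl h]; simp [mul_comm]
    _ = ∑ j ∈ Ioc τ σ, ∑ i ∈ T, z i j := Finset.sum_comm
    _ ≤ ∑ j ∈ Ioc τ σ, M.B j := by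
        refine Finset.sum_le_sum fun j _ => le_trans ?_ (hcap j)
        exact Finset.sum_le_sum_of_subset_of_nonneg hT fun i _ _ => h0 i j

/-- A chunk with deadline at most `σ` of which nothing is downloaded up to slot `τ` is downloaded
within the slots `τ+1, …, σ`. -/
lemma IsSchedule.sum_Ioc_eq {M : SchedModel} {x : ℕ → ℝ} {z : ℕ → ℕ → ℝ}
    (hz : M.IsSchedule x z) {i τ σ : ℕ} (hi : i ∈ Icc 1 M.C) (hσ : M.d i ≤ σ)
    (h : ∀ j ∈ Icc 1 τ, z i j = 0) : ∑ j ∈ Ioc τ σ, z i j = x i := by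
  obtain ⟨-, hwin, hsum, -, -⟩ := hz
  rw [← hsum i hi]
  have e1 : ∑ j ∈ Ioc τ σ, z i j = ∑ j ∈ Icc 1 σ, z i j := by
    refine Finset.sum_subset (fun j hj => ?_) (fun j hj hj' => ?_)
    · simp only [mem_Ioc, mem_Icc] at *; omega
    · refine h j ?_
      simp only [mem_Ioc, mem_Icc] at *; omega
  rw [e1]
  refine (Finset.sum_subset (fun j hj => ?_) (fun j hj hj' => ?_)).symm
  · simp only [mem_Icc] at *; omega
  · refine hwin i j (Or.inr ?_)
    simp only [mem_Icc] at *; omega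

lemma hallCond_of_feasible (M : SchedModel) {X : ℝ} (hX : 0 < X) {S : Finset ℕ}
    (hS : S ⊆ Icc 1 M.C) (h : M.FeasibleSet X S) : M.HallCond X S := by
  obtain ⟨z, hz⟩ := h
  have hz' := hz
  obtain ⟨h0, hwin, hsum, -, hbuf⟩ := hz'
  refine ⟨fun τ σ => ?_, fun τ σ => ?_⟩
  · -- Split the chunks according to whether their download has started by slot `τ`.
    set T := {i ∈ S | τ < M.d i ∧ M.d i ≤ σ} with hT
    have hsplit := Finset.card_filter_add_card_filter_not (s := T)
      (fun i => 0 < ∑ j ∈ Icc 1 τ, z i j)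
    have h1 : #{i ∈ T | 0 < ∑ j ∈ Icc 1 τ, z i j} ≤ M.cap := by
      rw [M.le_cap_iff]
      refine le_trans ?_ (hbuf τ)
      have := M.hL.le
      gcongr
      intro i hi
      simp only [hT, mem_filter] at hi ⊢
      exact ⟨hS hi.1.1, hi.1.2.1, hi.2⟩
    have h2 : X * #{i ∈ T | ¬ 0 < ∑ j ∈ Icc 1 τ, z i j} ≤ ∑ j ∈ Ioc τ σ, M.B j := by
      refine hz.card_mul_le (fun i hi => ?_) τ σ (fun i hi => ?_)
      · simp only [hT, mem_filter] at hi
        exact hS hi.1.1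
      · simp only [hT, mem_filter] at hi
        have h3 : ∑ j ∈ Icc 1 τ, z i j = 0 :=
          le_antisymm (not_lt.1 hi.2) (Finset.sum_nonneg fun j _ => h0 i j)
        rw [Finset.sum_eq_zero_iff_of_nonneg fun j _ => h0 i j] at h3
        rw [hz.sum_Ioc_eq (hS hi.1.1) hi.1.2.2 h3, if_pos hi.1.1]
    rw [← hsplit]
    push_cast
    have h1' : X * (#{i ∈ T | 0 < ∑ j ∈ Icc 1 τ, z i j} : ℝ) ≤ X * M.cap := by gcongr
    linarith
  · refine hz.card_mul_le (fun i hi => hS (mem_filter.1 hi).1) τ σ (fun i hi => ?_)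
    simp only [mem_filter] at hi
    rw [hz.sum_Ioc_eq (hS hi.1) hi.2.2 fun j hj => hwin i j (Or.inl ?_), if_pos hi.1]
    have := (mem_Icc.1 hj).2
    omega

/-! ### The latest schedule -/

/-- The amount of `S`-work that can be done in the slots after `τ` when each chunk must be
downloaded by its deadline and release times are ignored. By duality it is the minimum, over
`σ ≥ τ`, of the bandwidth in `(τ, σ]` plus the work with deadline after `σ`; indices `σ < τ` give
the same value as `σ = τ`. -/
noncomputable def lateWork (M : SchedModel) (X : ℝ) (S : Finset ℕ) (τ : ℕ) : ℝ :=
  ⨅ σ : ℕ, (X * #{i ∈ S | max τ σ < M.d i} + ∑ j ∈ Ioc τ σ, M.B j)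

lemma lateWork_le (M : SchedModel) {X : ℝ} (hX : 0 < X) (S : Finset ℕ) (τ σ : ℕ) :
    M.lateWork X S τ ≤ X * #{i ∈ S | max τ σ < M.d i} + ∑ j ∈ Ioc τ σ, M.B j := by
  refine ciInf_le ⟨0, ?_⟩ σ
  rintro _ ⟨σ', rfl⟩
  have := Finset.sum_nonneg fun j (_ : j ∈ Ioc τ σ') => M.hB j
  positivity

lemma lateWork_nonneg (M : SchedModel) {X : ℝ} (hX : 0 < X) (S : Finset ℕ) (τ : ℕ) :
    0 ≤ M.lateWork X S τ := by
  refine le_ciInf fun σ => ?_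
  have := Finset.sum_nonneg fun j (_ : j ∈ Ioc τ σ) => M.hB j
  positivity

lemma lateWork_le_card (M : SchedModel) {X : ℝ} (hX : 0 < X) (S : Finset ℕ) (τ : ℕ) :
    M.lateWork X S τ ≤ X * #{i ∈ S | τ < M.d i} := by
  simpa using M.lateWork_le hX S τ τ

lemma lateWork_succ_le (M : SchedModel) {X : ℝ} (hX : 0 < X) (S : Finset ℕ) (τ : ℕ) :
    M.lateWork X S (τ + 1) ≤ M.lateWork X S τ := by
  refine le_ciInf fun σ => (M.lateWork_le hX S (τ + 1) σ).trans ?_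
  gcongr ?_ + ?_
  · gcongr X * ?_
    norm_cast
    refine card_le_card fun i hi => ?_
    simp only [mem_filter] at hi ⊢
    exact ⟨hi.1, by omega⟩
  · refine Finset.sum_le_sum_of_subset_of_nonneg (fun j hj => ?_) fun j _ _ => M.hB j
    simp only [mem_Ioc] at hj ⊢
    omega

lemma lateWork_le_succ_add (M : SchedModel) {X : ℝ} (hX : 0 < X) (S : Finset ℕ) (τ : ℕ) :
    M.lateWork X S τ ≤ M.lateWork X S (τ + 1) + M.B (τ + 1) := by
  rw [← sub_le_iff_le_add]
  refine le_ciInf fun σ => ?_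
  have h := M.lateWork_le hX S τ (max (τ + 1) σ)
  have e1 : max τ (max (τ + 1) σ) = max (τ + 1) σ := by omega
  have e2 : Ioc τ (max (τ + 1) σ) = insert (τ + 1) (Ioc (τ + 1) σ) := by
    ext j; simp only [mem_Ioc, mem_insert]; omega
  rw [e1, e2, Finset.sum_insert (by simp)] at h
  linarith

lemma lateWork_antitone (M : SchedModel) {X : ℝ} (hX : 0 < X) (S : Finset ℕ) :
    Antitone (M.lateWork X S) :=
  antitone_nat_of_succ_le (M.lateWork_succ_le hX S)

/-- The number of chunks of `S` with index larger than `i`. -/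
def rank (S : Finset ℕ) (i : ℕ) : ℕ := #{k ∈ S | i < k}

/-- By the buffer part of the counting condition, at most `cap` chunks' worth of work with
deadline after `τ` is left to the slots up to `τ`. -/
lemma HallCond.le_lateWork {M : SchedModel} {X : ℝ} {S : Finset ℕ} (h : M.HallCond X S)
    (τ : ℕ) : X * #{i ∈ S | τ < M.d i} - X * M.cap ≤ M.lateWork X S τ := by
  refine le_ciInf fun σ => ?_
  have h1 := h.1 τ σ
  have e : #{i ∈ S | τ < M.d i} =
      #{i ∈ S | max τ σ < M.d i} + #{i ∈ S | τ < M.d i ∧ M.d i ≤ σ} := by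
    rw [← Finset.card_union_of_disjoint]
    · congr 1; ext i; simp only [mem_filter, mem_union, max_lt_iff]
      by_cases hi : i ∈ S <;> simp only [hi, true_and, false_and, or_self]
      omega
    · rw [Finset.disjoint_left]; intro i hi hi'
      simp only [mem_filter, max_lt_iff] at hi hi'; omega
  rw [e]; push_cast; linarith

/-- By the window part of the counting condition, chunk `i` is completely served in the slots
after `τ` whenever `τ < t i`. -/
lemma HallCond.rank_le_lateWork {M : SchedModel} {X : ℝ} (hX : 0 < X) {S : Finset ℕ}
    (h : M.HallCond X S) {i τ : ℕ} (hi : i ∈ S) (hτ : τ < M.t i) :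
    X * rank S i + X ≤ M.lateWork X S τ := by
  refine le_ciInf fun σ => ?_
  have h1 := h.2 τ σ
  have e : rank S i + 1 ≤
      #{i ∈ S | max τ σ < M.d i} + #{i ∈ S | τ < M.t i ∧ M.d i ≤ σ} := by
    have hr : rank S i + 1 = #(insert i {k ∈ S | i < k}) := by
      rw [Finset.card_insert_of_notMem (by simp)]; rfl
    rw [hr]
    refine le_trans (Finset.card_le_card fun k hk => ?_) (Finset.card_union_le _ _)
    have hk' : k ∈ S ∧ i ≤ k := by
      simp only [mem_insert, mem_filter] at hk
      rcases hk with rfl | hk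
      · exact ⟨hi, le_rfl⟩
      · exact ⟨hk.1, hk.2.le⟩
    have h2 := M.tmono hk'.2
    have h3 := M.htd k
    simp only [mem_filter, mem_union, max_lt_iff, hk'.1, true_and]
    omega
  have e' : (rank S i : ℝ) + 1 ≤
      (#{i ∈ S | max τ σ < M.d i} : ℝ) + #{i ∈ S | τ < M.t i ∧ M.d i ≤ σ} := by
    exact_mod_cast e
  nlinarith

/-- Chunks with deadline after `d i` have index larger than `i`. -/
lemma lateWork_le_rank (M : SchedModel) {X : ℝ} (hX : 0 < X) (S : Finset ℕ) {i τ : ℕ}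
    (hτ : M.d i ≤ τ) : M.lateWork X S τ ≤ X * rank S i := by
  refine (M.lateWork_le_card hX S τ).trans ?_
  unfold rank
  gcongr X * ?_
  norm_cast
  refine Finset.card_le_card fun k hk => ?_
  simp only [mem_filter] at hk ⊢
  refine ⟨hk.1, ?_⟩
  by_contra hki
  have := M.dmono (not_lt.1 hki)
  omega

/-- The length of `[0, u] ∩ [0, X]`. -/
noncomputable def clamp (X u : ℝ) : ℝ := max 0 (min X u)

lemma clamp_mono (X : ℝ) : Monotone (clamp X) := fun u v h => by
  unfold clamp; gcongr

lemma clamp_of_nonpos {X u : ℝ} (h : u ≤ 0) : clamp X u = 0 :=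
  max_eq_left ((min_le_right _ _).trans h)

lemma clamp_of_ge {X u : ℝ} (hX : 0 < X) (h : X ≤ u) : clamp X u = X := by
  unfold clamp; rw [min_eq_left h, max_eq_right hX.le]

/-- The pieces that the chunks of `S` cut out of the work interval `[0, w]` add up to
`[0, w] ∩ [0, |S| X]`. -/
lemma sum_clamp {X : ℝ} (hX : 0 < X) (w : ℝ) (hw : 0 ≤ w) (S : Finset ℕ) :
    ∑ i ∈ S, clamp X (w - X * rank S i) = min w (X * #S) := by
  induction S using Finset.induction_on_min with
  | empty => simp [hw]
  | insert a s ha ih =>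
    have hn : a ∉ s := fun h => lt_irrefl _ (ha a h)
    have h1 : rank (insert a s) a = #s := by
      unfold rank
      congr 1; ext k; simp only [mem_filter, mem_insert]
      constructor
      · rintro ⟨rfl | h, h'⟩
        · omega
        · exact h
      · exact fun h => ⟨Or.inr h, ha k h⟩
    have h2 : ∀ i ∈ s, rank (insert a s) i = rank s i := by
      intro i hi
      unfold rank
      rw [Finset.filter_insert, if_neg (not_lt.2 (ha i hi).le)]
    rw [Finset.sum_insert hn, h1, Finset.card_insert_of_notMem hn,
      Finset.sum_congr rfl fun i hi => by rw [h2 i hi], ih]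
    push_cast
    unfold clamp
    rcases le_total w (X * #s) with h | h
    · rw [min_eq_left h, min_eq_right (by linarith), max_eq_left (by linarith),
        min_eq_left (by linarith)]
      ring
    · rw [min_eq_right h]
      rcases le_total X (w - X * #s) with h' | h'
      · rw [min_eq_left h', max_eq_right hX.le, min_eq_right (by linarith)]; ring
      · rw [min_eq_right h', max_eq_right (by linarith), min_eq_left (by linarith)]; ring

lemma sum_Icc_telescope (f : ℕ → ℝ) (τ : ℕ) :
    ∑ j ∈ Icc 1 τ, (f (j - 1) - f j) = f 0 - f τ := by
  induction τ with
  | zero => simp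
  | succ n ih => rw [Finset.sum_Icc_succ_top (by omega), ih]; simp

/-- The latest schedule: slot `j` serves the piece `[W j, W (j-1)]` of the work axis, on which
chunk `i ∈ S` occupies `[X * rank S i, X * rank S i + X]`. -/
noncomputable def lateSchedule (M : SchedModel) (X : ℝ) (S : Finset ℕ) (i j : ℕ) : ℝ :=
  if i ∈ S then clamp X (M.lateWork X S (j - 1) - X * rank S i)
    - clamp X (M.lateWork X S j - X * rank S i) else 0

lemma HallCond.sum_lateSchedule {M : SchedModel} {X : ℝ} (hX : 0 < X) {S : Finset ℕ}
    (h : M.HallCond X S) {i : ℕ} (hi : i ∈ S) (τ : ℕ) :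
    ∑ j ∈ Icc 1 τ, M.lateSchedule X S i j
      = X - clamp X (M.lateWork X S τ - X * rank S i) := by
  simp only [lateSchedule, if_pos hi]
  rw [sum_Icc_telescope (fun j => clamp X (M.lateWork X S j - X * rank S i)),
    clamp_of_ge hX (by have := h.rank_le_lateWork hX hi (τ := 0) (M.ht i); linarith)]

lemma feasible_of_hallCond (M : SchedModel) {X : ℝ} (hX : 0 < X) {S : Finset ℕ}
    (hS : S ⊆ Icc 1 M.C) (h : M.HallCond X S) : M.FeasibleSet X S := by
  refine ⟨M.lateSchedule X S, ?_, ?_, ?_, ?_, ?_⟩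
  · intro i j
    unfold lateSchedule
    split_ifs
    · refine sub_nonneg.2 (clamp_mono X ?_)
      have := M.lateWork_antitone hX S (Nat.sub_le j 1)
      linarith
    · exact le_rfl
  · intro i j hj
    unfold lateSchedule
    split_ifs with hi
    · have hanti := M.lateWork_antitone hX S (Nat.sub_le j 1)
      rcases hj with hj | hj
      · have := h.rank_le_lateWork hX hi hj
        rw [clamp_of_ge hX (by linarith), clamp_of_ge hX (by linarith), sub_self]
      · have := M.lateWork_le_rank hX S (i := i) (τ := j - 1) (by omega)
        rw [clamp_of_nonpos (by linarith), clamp_of_nonpos (by linarith), sub_self]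
    · rfl
  · intro i _
    by_cases hi : i ∈ S
    · have := M.lateWork_le_rank hX S (i := i) le_rfl
      rw [h.sum_lateSchedule hX hi, clamp_of_nonpos (by linarith)]
      simp [hi]
    · simp [lateSchedule, hi]
  · intro j
    have e : ∑ i ∈ Icc 1 M.C, M.lateSchedule X S i j
        = M.lateWork X S (j - 1) - M.lateWork X S j := by
      have hle : ∀ τ, M.lateWork X S τ ≤ X * #S := fun τ =>
        (M.lateWork_le_card hX S τ).trans (by gcongr; exact Finset.filter_subset _ _)
      rw [← Finset.sum_subset hS fun i _ hi => by simp [lateSchedule, hi]]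
      rw [Finset.sum_congr rfl fun i hi => by rw [lateSchedule, if_pos hi],
        Finset.sum_sub_distrib, sum_clamp hX _ (M.lateWork_nonneg hX S _),
        sum_clamp hX _ (M.lateWork_nonneg hX S _), min_eq_left (hle _), min_eq_left (hle _)]
    rw [e]
    cases j with
    | zero => simpa using M.hB 0
    | succ n =>
      have := M.lateWork_le_succ_add hX S n
      simp only [Nat.add_sub_cancel]
      linarith
  · intro τ
    rw [← M.le_cap_iff]
    set T := (Icc 1 M.C).filter
      (fun i => τ < M.d i ∧ 0 < ∑ j ∈ Icc 1 τ, M.lateSchedule X S i j) with hT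
    rcases T.eq_empty_or_nonempty with h0 | hne
    · simp [h0]
    have hTS : ∀ i ∈ T, i ∈ S := by
      intro i hi
      by_contra hiS
      simp [hT, lateSchedule, hiS] at hi
    -- The chunks of `T` and those above its largest element `m` are disjoint sets of chunks with
    -- deadline after `τ`, and the latter number at least `#{d > τ} - cap` by the bound on `W τ`.
    set m := T.max' hne with hm
    have hmT : m ∈ T := T.max'_mem hne
    have hmS := hTS m hmT
    have hmd := (mem_filter.1 hmT).2
    rw [h.sum_lateSchedule hX hmS] at hmd
    have hlt : M.lateWork X S τ < X * rank S m + X := by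
      by_contra hcon
      rw [clamp_of_ge hX (by linarith)] at hmd
      simp at hmd
    have hlow := h.le_lateWork τ
    have hrank : #{i ∈ S | τ < M.d i} < rank S m + 1 + M.cap := by
      have : X * (#{i ∈ S | τ < M.d i} : ℝ) < X * (rank S m + 1 + M.cap) := by linarith
      exact_mod_cast lt_of_mul_lt_mul_left this hX.le
    have hcard : #T + rank S m ≤ #{i ∈ S | τ < M.d i} := by
      unfold rank
      rw [← Finset.card_union_of_disjoint]
      · refine Finset.card_le_card fun k hk => ?_
        simp only [mem_union, mem_filter] at hk ⊢
        rcases hk with hk | hk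
        · exact ⟨hTS k hk, (mem_filter.1 hk).2.1⟩
        · exact ⟨hk.1, hmd.1.trans_le (M.dmono hk.2.le)⟩
      · rw [Finset.disjoint_left]
        intro k hk hk'
        have := T.le_max' k hk
        have := (mem_filter.1 hk').2
        omega
    omega

/-! ### Exchange -/

/-- A chunk `m` can replace the largest element `s` of `S` below it, provided that `m`
is compatible with the chunks of `S` above `m`. -/
lemma exchange_s3 (M : SchedModel) {X : ℝ} (hX : 0 < X) {S : Finset ℕ} {s m : ℕ}
    (hS : M.HallCond X S) (hs : s ∈ S) (hsm : s < m)
    (hgap : ∀ k ∈ S, k < m → k ≤ s) (hA : M.HallCond X (insert m {k ∈ S | m < k})) :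
    M.HallCond X (insert m (S.erase s)) := by
  -- A condition `p` that `s` satisfies whenever `m` does is counted no more often after the
  -- exchange; otherwise no element of `S` below `m` satisfies it, and `hA` applies.
  have key : ∀ (p : ℕ → Prop) [DecidablePred p], (p m → ¬ p s → ∀ k ∈ S, k ≤ s → ¬ p k) → ∀ b : ℝ,
      X * #{i ∈ S | p i} ≤ b → X * #{i ∈ insert m {k ∈ S | m < k} | p i} ≤ b →
      X * #{i ∈ insert m (S.erase s) | p i} ≤ b := by
    intro p _ hp b h1 h2
    by_cases hcase : p m ∧ ¬ p s
    · refine le_trans ?_ h2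
      gcongr X * ?_
      norm_cast
      refine Finset.card_le_card fun k hk => ?_
      simp only [mem_filter, mem_insert, mem_erase] at hk ⊢
      refine ⟨?_, hk.2⟩
      rcases hk.1 with h | h
      · exact Or.inl h
      · refine or_iff_not_imp_left.2 fun hkm => ⟨h.2, ?_⟩
        by_contra hlt
        exact hp hcase.1 hcase.2 k h.2 (hgap k h.2 (by omega)) hk.2
    · refine le_trans ?_ h1
      gcongr X * ?_
      norm_cast
      by_cases hpm : p m
      · have hps : p s := by tauto
        rw [Finset.filter_insert, if_pos hpm, Finset.filter_erase]
        refine (Finset.card_insert_le _ _).trans ?_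
        rw [Finset.card_erase_add_one (by simp [hs, hps])]
      · rw [Finset.filter_insert, if_neg hpm]
        exact Finset.card_le_card (Finset.filter_subset_filter _ (Finset.erase_subset _ _))
  have hd := M.dmono hsm.le
  have ht := M.tmono hsm.le
  refine ⟨fun τ σ => key (fun i => τ < M.d i ∧ M.d i ≤ σ) ?_ _ (hS.1 τ σ) (hA.1 τ σ),
    fun τ σ => key (fun i => τ < M.t i ∧ M.d i ≤ σ) ?_ _ (hS.2 τ σ) (hA.2 τ σ)⟩
  · intro h1 h2 k _ hk h3
    have := M.dmono hk
    omega
  · intro h1 h2 k _ hk h3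
    have := M.tmono hk
    omega

/-! ### The greedy selection -/

lemma backGreedyAux_subset (M : SchedModel) (X : ℝ) (k : ℕ) (hk : k ≤ M.C) :
    M.backGreedyAux X k ⊆ Ioc (M.C - k) M.C := by
  induction k with
  | zero => simp [backGreedyAux]
  | succ k ih =>
    have h1 : M.backGreedyAux X k ⊆ Ioc (M.C - (k + 1)) M.C :=
      (ih (by omega)).trans (Finset.Ioc_subset_Ioc_left (by omega))
    simp only [backGreedyAux]
    split_ifs
    · refine Finset.insert_subset ?_ h1
      rw [mem_Ioc]; omega
    · exact h1

lemma backGreedyAux_hallCond (M : SchedModel) {X : ℝ} (hX : 0 < X) (k : ℕ) (hk : k ≤ M.C) :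
    M.HallCond X (M.backGreedyAux X k) := by
  have hsub : ∀ n ≤ M.C, M.backGreedyAux X n ⊆ Icc 1 M.C := fun n hn i hi => by
    have := mem_Ioc.1 (M.backGreedyAux_subset X n hn hi)
    rw [mem_Icc]; omega
  induction k with
  | zero =>
    have h : ∀ τ σ, 0 ≤ ∑ j ∈ Ioc τ σ, M.B j := fun τ σ =>
      Finset.sum_nonneg fun j _ => M.hB j
    refine ⟨fun τ σ => ?_, fun τ σ => ?_⟩
    · have := h τ σ
      simp only [backGreedyAux, Finset.filter_empty, Finset.card_empty]
      push_cast
      rw [mul_zero]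
      positivity
    · simpa [backGreedyAux] using h τ σ
  | succ k ih =>
    have h1 := hsub (k + 1) hk
    simp only [backGreedyAux] at h1 ⊢
    split_ifs at h1 ⊢ with hf
    · exact M.hallCond_of_feasible hX h1 hf
    · exact ih (by omega)

lemma mem_backGreedyAux_iff (M : SchedModel) (X : ℝ) {k n i : ℕ} (hkn : k ≤ n) (hn : n ≤ M.C)
    (hi : M.C - k < i) : i ∈ M.backGreedyAux X n ↔ i ∈ M.backGreedyAux X k := by
  induction n, hkn using Nat.le_induction with
  | base => rfl
  | succ n hkn ih =>
    rw [← ih (by omega)]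
    simp only [backGreedyAux]
    split_ifs
    · rw [mem_insert, or_iff_right]
      omega
    · rfl

lemma backGreedy_maximal (M : SchedModel) {X : ℝ} (hX : 0 < X) {m : ℕ} (hm : m ∈ Icc 1 M.C)
    (h : M.HallCond X (insert m {k ∈ M.backGreedy X | m < k})) : m ∈ M.backGreedy X := by
  rw [mem_Icc] at hm
  have e : {k ∈ M.backGreedy X | m < k} = M.backGreedyAux X (M.C - m) := by
    ext i
    rw [mem_filter]
    constructor
    · rintro ⟨h1, h2⟩
      exact (M.mem_backGreedyAux_iff X (by omega) le_rfl (by omega)).1 h1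
    · intro h1
      have h2 := mem_Ioc.1 (M.backGreedyAux_subset X _ (by omega) h1)
      exact ⟨(M.mem_backGreedyAux_iff X (by omega) le_rfl (by omega)).2 h1, by omega⟩
  rw [e] at h
  have hf : M.FeasibleSet X (insert m (M.backGreedyAux X (M.C - m))) := by
    refine M.feasible_of_hallCond hX (Finset.insert_subset (mem_Icc.2 hm) fun i hi => ?_) h
    have := mem_Ioc.1 (M.backGreedyAux_subset X _ (by omega) hi)
    rw [mem_Icc]; omega
  refine (M.mem_backGreedyAux_iff X (k := M.C - m + 1) (by omega) le_rfl (by omega)).2 ?_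
  have e2 : M.C - (M.C - m) = m := by omega
  simp only [backGreedyAux, e2, if_pos hf]
  exact Finset.mem_insert_self _ _

/-- Suffix domination for sets that already agree with the greedy selection above `m`, by
induction on `m`. -/
lemma dominates_of_agree (M : SchedModel) {X : ℝ} (hX : 0 < X) (m : ℕ) :
    m ≤ M.C → ∀ S : Finset ℕ, S ⊆ Icc 1 M.C → M.HallCond X S →
      (∀ k, m < k → (k ∈ S ↔ k ∈ M.backGreedy X)) →
      ∀ i, #(S ∩ Icc i M.C) ≤ #(M.backGreedy X ∩ Icc i M.C) := by
  induction m with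
  | zero =>
    intro _ S hS _ hag i
    refine Finset.card_le_card (Finset.inter_subset_inter_right fun k hk => ?_)
    exact (hag k (mem_Icc.1 (hS hk)).1).1 hk
  | succ m ih =>
    intro hmC S hS hok hag i
    have hfil : {k ∈ S | m + 1 < k} = {k ∈ M.backGreedy X | m + 1 < k} := by
      ext k
      simp only [mem_filter]
      constructor <;> rintro ⟨h1, h2⟩
      · exact ⟨(hag k h2).1 h1, h2⟩
      · exact ⟨(hag k h2).2 h1, h2⟩
    by_cases hsame : m + 1 ∈ S ↔ m + 1 ∈ M.backGreedy X
    · refine ih (by omega) S hS hok (fun k hk => ?_) i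
      rcases Nat.lt_or_ge (m + 1) k with h | h
      · exact hag k h
      · obtain rfl : k = m + 1 := by omega
        exact hsame
    by_cases hmS : m + 1 ∈ S
    · refine absurd ?_ hsame
      refine iff_of_true hmS (M.backGreedy_maximal hX (mem_Icc.2 ⟨by omega, hmC⟩) ?_)
      rw [← hfil]
      exact hok.mono hX (Finset.insert_subset hmS (Finset.filter_subset _ _))
    have hmG : m + 1 ∈ M.backGreedy X := by tauto
    rcases ({k ∈ S | k < m + 1} : Finset ℕ).eq_empty_or_nonempty with hemp | hne
    · refine Finset.card_le_card (Finset.inter_subset_inter_right fun k hk => ?_)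
      have h1 : ¬ k < m + 1 := fun hlt => by
        have : k ∈ ({k ∈ S | k < m + 1} : Finset ℕ) := mem_filter.2 ⟨hk, hlt⟩
        rw [hemp] at this
        exact Finset.notMem_empty _ this
      have h2 : k ≠ m + 1 := fun h => hmS (h ▸ hk)
      exact (hag k (by omega)).1 hk
    · set s := ({k ∈ S | k < m + 1} : Finset ℕ).max' hne with hs
      obtain ⟨hsS, hsm⟩ := mem_filter.1 (({k ∈ S | k < m + 1} : Finset ℕ).max'_mem hne)
      rw [← hs] at hsS hsm
      have hok' := M.exchange_s3 hX hok hsS hsm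
        (fun k hk hkm => Finset.le_max' _ k (mem_filter.2 ⟨hk, hkm⟩)) (by
          rw [hfil]
          exact (M.backGreedyAux_hallCond hX M.C le_rfl).mono hX
            (Finset.insert_subset hmG (Finset.filter_subset _ _)))
      refine le_trans ?_ (ih (by omega) _ (Finset.insert_subset
        (mem_Icc.2 ⟨by omega, hmC⟩) ((Finset.erase_subset _ _).trans hS)) hok' ?_ i)
      · -- A suffix that contains `s` also contains `m + 1`.
        by_cases hsi : i ≤ s
        · have hsmem : s ∈ S ∩ Icc i M.C := mem_inter.2 ⟨hsS, mem_Icc.2 ⟨hsi, by omega⟩⟩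
          have hnot : m + 1 ∉ (S ∩ Icc i M.C).erase s := fun h =>
            hmS (mem_inter.1 (Finset.mem_of_mem_erase h)).1
          rw [← Finset.card_erase_add_one hsmem, ← Finset.card_insert_of_notMem hnot]
          refine Finset.card_le_card fun k hk => ?_
          simp only [mem_insert, mem_erase, mem_inter, mem_Icc] at hk ⊢
          rcases hk with rfl | hk
          · exact ⟨Or.inl rfl, by omega, hmC⟩
          · exact ⟨Or.inr ⟨hk.1, hk.2.1⟩, hk.2.2⟩
        · refine Finset.card_le_card fun k hk => ?_
          simp only [mem_insert, mem_erase, mem_inter, mem_Icc] at hk ⊢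
          exact ⟨Or.inr ⟨by omega, hk.1⟩, hk.2⟩
      · intro k hk
        rcases Nat.lt_or_ge (m + 1) k with h | h
        · rw [← hag k h, mem_insert, mem_erase]
          constructor
          · rintro (h' | h')
            · omega
            · exact h'.2
          · exact fun h' => Or.inr ⟨by omega, h'⟩
        · obtain rfl : k = m + 1 := by omega
          exact iff_of_true (Finset.mem_insert_self _ _) hmG

end SchedModel

/-- the backward greedy selection dominates every feasible selection
on every suffix {i, i+1, …, C}. -/
theorem backward_greedy_suffix_dominates (M : SchedModel) (X : ℝ) (hX : 0 < X) :
    ∀ S : Finset ℕ, S ⊆ Finset.Icc 1 M.C → M.FeasibleSet X S →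
      ∀ i ∈ Finset.Icc 1 M.C,
        (S ∩ Finset.Icc i M.C).card ≤ (M.backGreedy X ∩ Finset.Icc i M.C).card := by
  intro S hS hf i _
  refine M.dominates_of_agree hX M.C le_rfl S hS (M.hallCond_of_feasible hX hS hf) ?_ i
  intro k hk
  refine iff_of_false (fun h => ?_) (fun h => ?_)
  · have := (Finset.mem_Icc.1 (hS h)).2
    omega
  · have := (Finset.mem_Ioc.1 (M.backGreedyAux_subset X M.C le_rfl h)).2
    omega
end

section
/- (Lexicographic layer-priority lemma) Let N ≥ 1, C ≥ 1, β ≥ 1, let Y_0,…,Y_N > 0 be layer sizes, and let 0 < γ < 1 satisfy γ^a Y_a > (Σ_{k=a+1}^N γ^k Y_k) · (Σ_{i=1}^C β^i) for every a = 0,…,N−1. Let Z and Z′ be two layer-decision matrices with Z_{m,i}, Z′_{m,i} ∈ {0, Y_m} for all layers m = 0,…,N and chunks i = 1,…,C. If there is a layer a such that Z_{m,i} = Z′_{m,i} for all m < a and all i, and Σ_{i=1}^C β^i Z_{a,i} ≥ Σ_{i=1}^C β^i Z′_{a,i} + Y_a, then Σ_{m=0}^N γ^m Σ_{i=1}^C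 β^i Z_{m,i} > Σ_{m=0}^N γ^m Σ_{i=1}^C β^i Z′_{m,i}. That is, under the paper's condition on γ, gaining the a-th layer of even one chunk outweighs every possible gain from all layers above a of all chunks. -/
/-!
Split each objective into the layers below `a`, the layer `a`, and the layers above `a`.
The layers below contribute equally; layer `a` gains at least `γ ^ a * Y a`; and since every
entry of a decision matrix lies in `[0, Y m]`, the layers above can lose at most
`(∑ k > a, γ ^ k * Y k) * ∑ i, β ^ i`, which the condition on `γ` makes strictly smaller.
-/

lemma sum_Icc_split_at (f : ℕ → ℝ) {a N : ℕ} (ha : a ≤ N) :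
    ∑ m ∈ Finset.Icc 0 N, f m =
      ∑ m ∈ Finset.range a, f m + f a + ∑ m ∈ Finset.Icc (a + 1) N, f m := by
  have h0 : Finset.Icc 0 N = Finset.range (N + 1) := by grind
  have h1 : Finset.Icc (a + 1) N = Finset.Ico (a + 1) (N + 1) := by grind
  rw [h0, h1, ← Finset.sum_range_succ, Finset.sum_range_add_sum_Ico f (by omega)]

/-- lexicographic layer-priority lemma: under the paper's condition
(1) on γ, if two layer-decision matrices agree on all layers below `a` and `Z`
gains at least one chunk's `a`-th layer over `Z′` (in the β-weighted sum), then `Z`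
has strictly larger overall objective, regardless of all layers above `a`. -/
theorem layer_priority (N C : ℕ) (hN : 1 ≤ N) (hC : 1 ≤ C)
    (β γ : ℝ) (hβ : 1 ≤ β) (hγ0 : 0 < γ) (hγ1 : γ < 1)
    (Y : ℕ → ℝ) (hY : ∀ n ≤ N, 0 < Y n)
    (hcond : ∀ a < N,
      (∑ k ∈ Finset.Icc (a + 1) N, γ ^ k * Y k) * (∑ i ∈ Finset.Icc 1 C, β ^ i) <
        γ ^ a * Y a)
    (Z Z' : ℕ → ℕ → ℝ)
    (hZ : ∀ m ≤ N, ∀ i ∈ Finset.Icc 1 C, Z m i = 0 ∨ Z m i = Y m)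
    (hZ' : ∀ m ≤ N, ∀ i ∈ Finset.Icc 1 C, Z' m i = 0 ∨ Z' m i = Y m)
    (a : ℕ) (ha : a ≤ N)
    (hagree : ∀ m < a, ∀ i ∈ Finset.Icc 1 C, Z m i = Z' m i)
    (hgain : ∑ i ∈ Finset.Icc 1 C, β ^ i * Z' a i + Y a ≤
      ∑ i ∈ Finset.Icc 1 C, β ^ i * Z a i) :
    ∑ m ∈ Finset.Icc 0 N, γ ^ m * ∑ i ∈ Finset.Icc 1 C, β ^ i * Z' m i <
      ∑ m ∈ Finset.Icc 0 N, γ ^ m * ∑ i ∈ Finset.Icc 1 C, β ^ i * Z m i := by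
  have hβ0 : 0 ≤ β := by linarith
  rw [sum_Icc_split_at _ ha, sum_Icc_split_at _ ha]
  have hlow : ∑ m ∈ Finset.range a, γ ^ m * ∑ i ∈ Finset.Icc 1 C, β ^ i * Z' m i =
      ∑ m ∈ Finset.range a, γ ^ m * ∑ i ∈ Finset.Icc 1 C, β ^ i * Z m i := by
    refine Finset.sum_congr rfl fun m hm => ?_
    congr 1
    refine Finset.sum_congr rfl fun i hi => ?_
    rw [hagree m (Finset.mem_range.mp hm) i hi]
  have hmid := mul_le_mul_of_nonneg_left hgain (pow_pos hγ0 a).le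
  have htail : ∑ m ∈ Finset.Icc (a + 1) N, γ ^ m * ∑ i ∈ Finset.Icc 1 C, β ^ i * Z' m i ≤
      ∑ m ∈ Finset.Icc (a + 1) N, γ ^ m * ∑ i ∈ Finset.Icc 1 C, β ^ i * Z m i +
      (∑ k ∈ Finset.Icc (a + 1) N, γ ^ k * Y k) * (∑ i ∈ Finset.Icc 1 C, β ^ i) := by
    rw [Finset.sum_mul, ← Finset.sum_add_distrib]
    refine Finset.sum_le_sum fun m hm => ?_
    have hmN : m ≤ N := (Finset.mem_Icc.mp hm).2
    rw [mul_assoc, ← mul_add, Finset.mul_sum _ _ (Y m), ← Finset.sum_add_distrib]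
    refine mul_le_mul_of_nonneg_left (Finset.sum_le_sum fun i hi => ?_) (pow_pos hγ0 m).le
    have hentry : Z' m i ≤ Z m i + Y m := by
      have := hY m hmN
      rcases hZ m hmN i hi with h | h <;> rcases hZ' m hmN i hi with h' | h' <;>
        rw [h, h'] <;> linarith
    have := mul_le_mul_of_nonneg_left hentry (pow_nonneg hβ0 i)
    linarith
  -- For the top layer `a = N` the sum over higher layers is empty, and `Y N > 0` suffices.
  have hstrict : (∑ k ∈ Finset.Icc (a + 1) N, γ ^ k * Y k) * (∑ i ∈ Finset.Icc 1 C, β ^ i) <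
      γ ^ a * Y a := by
    rcases ha.lt_or_eq with h | rfl
    · exact hcond a h
    · simpa using mul_pos (pow_pos hγ0 a) (hY a le_rfl)
  linarith
end

section
/- (Lemma 3) In the no-skip model, let d*(C) be the total stall duration produced by the no-skip base-layer forward algorithm, and let d′(C) be the total stall duration of any other feasible no-skip policy. Then d′(C) ≥ d*(C); i.e., the no-skip base-layer forward algorithm achieves the minimum possible total stall duration. Moreover, under the forward algorithm every chunk is completed no later than under any other in-order feasible no-skip policy. -/
/-!
The forward algorithm never lags behind the given policy on any chunk. Write `rem k` for the
amount of chunk `k` the algorithm still has to download and `M.left z τ k` for the amount the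
policy `(d, z)` still has to download after slot `τ`. The invariant carried through the slots is
`rem k ≤ M.left z τ k` for every chunk `k`, together with `dv ≤ d` for the stalls fixed so far.

Both vectors of remaining amounts are *in order* (`NSModel.InOrder`): every chunk after an
unfinished one is untouched. Two such vectors are comparable chunk by chunk as soon as their sums
are (`NSModel.InOrder.le_of_sum_le`). Within a slot the algorithm stops for one of three reasons:

* all chunks are complete, and there is nothing to prove;
* the bandwidth of the slot is exhausted: the policy cannot have used more, so the sums, and hence
  the chunks, compare;
* the buffer is full at chunk `i`: since `dv ≤ d`, the policy's buffer would be over-full too if it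
  downloaded any chunk `k ≥ i` in this slot (`NSModel.IsPolicy.buffer_block`), so the policy makes
  no progress on these chunks.

A chunk completed by the algorithm in slot `j` was unfinished under the policy before slot `j`, so
`j` is at most the policy's deadline, which preserves `dv ≤ d`.

The buffer argument needs `L ≤ B_m`, because a policy may download a chunk entirely in the slot of
its deadline without ever counting it in the buffer. If `B_m < L` the algorithm never downloads
anything, no stall is ever recorded, and its completion slots are infima of empty sets, hence `0`,
so both claims hold by convention.
-/

/-!
No-skip model: C ≥ 1 chunks of duration L slots, each requiring full download of
its base-layer amount X_0 > 0; startup delay s ≥ 1; bandwidth B(j) ≥ 0; buffer of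
B_m > 0 seconds. The deadline of chunk i is (i−1)L + s + d(i), where the cumulative
stall d(i) ≥ 0 is nondecreasing in i.
-/

open scoped Classical

structure NSModel where
  C : ℕ
  hC : 1 ≤ C
  L : ℕ
  hL : 0 < L
  X0 : ℝ
  hX0 : 0 < X0
  s : ℕ
  hs : 1 ≤ s
  B : ℕ → ℝ
  hB : ∀ j, 0 ≤ B j
  Bm : ℝ
  hBm : 0 < Bm

/-- Deadline of chunk `i` under cumulative stalls `d`. -/
def NSModel.deadline (M : NSModel) (d : ℕ → ℕ) (i : ℕ) : ℕ :=
  (i - 1) * M.L + M.s + d i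

/-- A feasible no-skip policy: nondecreasing stalls `d` together with an in-order
schedule `z` that fully downloads every chunk by its deadline, within bandwidth and
buffer constraints. -/
def NSModel.IsPolicy (M : NSModel) (d : ℕ → ℕ) (z : ℕ → ℕ → ℝ) : Prop :=
  Monotone d ∧
  (∀ i j, 0 ≤ z i j) ∧
  (∀ i j, (j < 1 ∨ M.deadline d i < j) → z i j = 0) ∧
  (∀ i ∈ Finset.Icc 1 M.C, ∑ j ∈ Finset.Icc 1 (M.deadline d i), z i j = M.X0) ∧
  (∀ j, ∑ i ∈ Finset.Icc 1 M.C, z i j ≤ M.B j) ∧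
  (∀ τ, (M.L : ℝ) * (((Finset.Icc 1 M.C).filter
      (fun i => τ < M.deadline d i ∧ 0 < ∑ j ∈ Finset.Icc 1 τ, z i j)).card : ℝ) ≤ M.Bm) ∧
  (∀ i i' j j', i < i' → 0 < z i j → 0 < z i' j' → j ≤ j')

/-- Within-slot step of the no-skip base-layer forward algorithm: processing chunks
in order from index `i` with remaining slot bandwidth `b`, remaining amounts `rem`
and the stall values `dv` already fixed for completed chunks (the slot is left idle
when downloading would violate the buffer constraint); when the current chunk
completes at slot `j`, its stall is set to the minimum nondecreasing value for
which it meets its deadline. Returns the in-slot downloads and updated stalls. -/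
noncomputable def NSModel.nsInner (M : NSModel) (j : ℕ) :
    ℕ → ℕ → ℝ → (ℕ → ℝ) → (ℕ → ℕ) → (ℕ → ℝ) × (ℕ → ℕ)
  | 0, _, _, _, dv => (fun _ => 0, dv)
  | fuel + 1, i, b, rem, dv =>
    if M.C < i then (fun _ => 0, dv)
    else if rem i ≤ 0 then M.nsInner j fuel (i + 1) b rem dv
    else if b ≤ 0 then (fun _ => 0, dv)
    else if M.Bm < (M.L : ℝ) * (1 + (((Finset.Icc 1 (i - 1)).filter
        (fun i' => j < (i' - 1) * M.L + M.s + dv i')).card : ℝ)) then (fun _ => 0, dv)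
    else if b < rem i then (fun i' => if i' = i then b else 0, dv)
    else
      let dv' := Function.update dv i (max (dv (i - 1)) (j - ((i - 1) * M.L + M.s)))
      let rest := M.nsInner j fuel (i + 1) (b - rem i) (Function.update rem i 0) dv'
      (fun i' => (if i' = i then rem i else 0) + rest.1 i', rest.2)

/-- State (remaining amounts, fixed stall values) of the no-skip base-layer
forward algorithm after slot `j`. -/
noncomputable def NSModel.nsState (M : NSModel) : ℕ → (ℕ → ℝ) × (ℕ → ℕ)
  | 0 => (fun i => if i ∈ Finset.Icc 1 M.C then M.X0 else 0, fun _ => 0)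
  | j + 1 =>
    let st := M.nsState j
    let step := M.nsInner (j + 1) (M.C + 1) 1 (M.B (j + 1)) st.1 st.2
    (fun i => st.1 i - step.1 i, step.2)

/-- Cumulative stall of chunk `i` produced by the forward algorithm. -/
noncomputable def NSModel.nsStall (M : NSModel) (i : ℕ) : ℕ :=
  sSup {k | ∃ j, (M.nsState j).2 i = k}

/-- Completion slot of chunk `i` under the forward algorithm. -/
noncomputable def NSModel.nsCompl (M : NSModel) (i : ℕ) : ℕ :=
  sInf {j | (M.nsState j).1 i ≤ 0}

namespace NSModel

/-! ### In-order vectors of remaining amounts -/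

/-- A vector of remaining amounts, each in `[0, X0]`, that arises from downloading chunks `1, …, C`
in order: whenever a chunk is unfinished, all later ones are untouched. -/
def InOrder (M : NSModel) (rem : ℕ → ℝ) : Prop :=
  (∀ k, 1 ≤ k → k ≤ M.C → 0 ≤ rem k ∧ rem k ≤ M.X0) ∧
  (∀ k k', 1 ≤ k → k < k' → k' ≤ M.C → 0 < rem k → rem k' = M.X0)

/-- The amount of chunk `k` that the schedule `z` has not downloaded by the end of slot `τ`. -/
def left (M : NSModel) (z : ℕ → ℕ → ℝ) (τ k : ℕ) : ℝ :=
  M.X0 - ∑ j ∈ Finset.Icc 1 τ, z k j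

/-- In-order vectors are totally ordered by their sums: if `p k < r k`, then `p` vanishes before
`k` and `r` is maximal after `k`, so `p ≤ r` everywhere with strict inequality at `k`. -/
lemma InOrder.le_of_sum_le {M : NSModel} {r p : ℕ → ℝ} (hr : M.InOrder r) (hp : M.InOrder p)
    (hs : ∑ k ∈ Finset.Icc 1 M.C, r k ≤ ∑ k ∈ Finset.Icc 1 M.C, p k)
    {k : ℕ} (h1 : 1 ≤ k) (hC : k ≤ M.C) : r k ≤ p k := by
  by_contra! hlt
  refine absurd hs (not_le.2 (Finset.sum_lt_sum (fun m hm => ?_)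
    ⟨k, Finset.mem_Icc.2 ⟨h1, hC⟩, hlt⟩))
  obtain ⟨hm1, hmC⟩ := Finset.mem_Icc.1 hm
  rcases lt_trichotomy m k with hmk | rfl | hkm
  · have hpm : ¬ 0 < p m := fun hpos => by
      have := hp.2 m k hm1 hmk hC hpos
      linarith [(hr.1 k h1 hC).2]
    linarith [(hr.1 m hm1 hmC).1]
  · exact hlt.le
  · rw [hr.2 k m h1 hkm hmC ((hp.1 k h1 hC).1.trans_lt hlt)]
    exact (hp.1 m hm1 hmC).2

/-- Downloading part of the first unfinished chunk preserves the in-order property. -/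
lemma InOrder.update {M : NSModel} {r : ℕ → ℝ} (hr : M.InOrder r) {i : ℕ} {v : ℝ}
    (hi : 0 < r i) (hlt : ∀ k, 1 ≤ k → k < i → r k ≤ 0) (hv0 : 0 ≤ v) (hv : v ≤ r i) :
    M.InOrder (Function.update r i v) := by
  refine ⟨fun k h1 hC => ?_, fun k k' h1 hkk' hC hpos => ?_⟩
  · by_cases hk : k = i
    · subst hk
      simpa using ⟨hv0, hv.trans (hr.1 k h1 hC).2⟩
    · simpa [hk] using hr.1 k h1 hC
  · by_cases hk : k = i
    · subst hk
      have hk' : k' ≠ k := by omega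
      simpa [hk'] using hr.2 k k' h1 hkk' hC hi
    · rw [Function.update_of_ne hk] at hpos
      by_cases hk' : k' = i
      · subst hk'
        exact absurd hpos (not_lt.2 (hlt k h1 hkk'))
      · simpa [hk'] using hr.2 k k' h1 hkk' hC hpos

lemma sum_update_Icc {C i : ℕ} (r : ℕ → ℝ) (v : ℝ) (h1 : 1 ≤ i) (hC : i ≤ C) :
    ∑ k ∈ Finset.Icc 1 C, Function.update r i v k = ∑ k ∈ Finset.Icc 1 C, r k - r i + v := by
  have hi : i ∈ Finset.Icc 1 C := Finset.mem_Icc.2 ⟨h1, hC⟩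
  rw [Finset.sum_update_of_mem hi, Finset.sdiff_singleton_eq_erase,
    ← Finset.add_sum_erase _ r hi]
  ring

lemma left_succ (M : NSModel) (z : ℕ → ℕ → ℝ) (τ k : ℕ) :
    M.left z (τ + 1) k = M.left z τ k - z k (τ + 1) := by
  unfold left
  rw [Finset.sum_Icc_succ_top (by omega)]
  ring

/-! ### Comparison with a feasible policy when `L ≤ B_m` -/

section Policy

variable {M : NSModel} {d : ℕ → ℕ} {z : ℕ → ℕ → ℝ}

lemma IsPolicy.sum_eq (h : M.IsPolicy d z) {i N : ℕ} (h1 : 1 ≤ i) (hC : i ≤ M.C)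
    (hN : M.deadline d i ≤ N) : ∑ j ∈ Finset.Icc 1 N, z i j = M.X0 := by
  rw [← h.2.2.2.1 i (Finset.mem_Icc.2 ⟨h1, hC⟩)]
  symm
  apply Finset.sum_subset (Finset.Icc_subset_Icc_right hN)
  intro j hj hj'
  simp only [Finset.mem_Icc] at hj hj'
  exact h.2.2.1 i j (Or.inr (by omega))

lemma IsPolicy.sum_le (h : M.IsPolicy d z) {i : ℕ} (h1 : 1 ≤ i) (hC : i ≤ M.C) (τ : ℕ) :
    ∑ j ∈ Finset.Icc 1 τ, z i j ≤ M.X0 := by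
  rw [← h.sum_eq h1 hC (le_max_right τ _)]
  exact Finset.sum_le_sum_of_subset_of_nonneg (Finset.Icc_subset_Icc_right (le_max_left _ _))
    (fun j _ _ => h.2.1 i j)

lemma IsPolicy.exists_later (h : M.IsPolicy d z) {i : ℕ} (h1 : 1 ≤ i) (hC : i ≤ M.C) {τ : ℕ}
    (hpos : 0 < M.left z τ i) : ∃ j, τ < j ∧ 0 < z i j := by
  by_contra! hno
  have : ∑ j ∈ Finset.Icc 1 τ, z i j = ∑ j ∈ Finset.Icc 1 (max τ (M.deadline d i)), z i j := by
    apply Finset.sum_subset (Finset.Icc_subset_Icc_right (le_max_left _ _))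
    intro j hj hj'
    simp only [Finset.mem_Icc] at hj hj'
    exact le_antisymm (hno j (by omega)) (h.2.1 i j)
  rw [h.sum_eq h1 hC (le_max_right τ _)] at this
  unfold left at hpos
  linarith

lemma IsPolicy.inOrder_left (h : M.IsPolicy d z) (τ : ℕ) : M.InOrder (M.left z τ) := by
  refine ⟨fun k h1 hC => ?_, fun k k' h1 hkk' hC hpos => ?_⟩
  · have h0 : 0 ≤ ∑ j ∈ Finset.Icc 1 τ, z k j := Finset.sum_nonneg fun j _ => h.2.1 k j
    have := h.sum_le h1 hC τ
    unfold left
    constructor <;> linarith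
  · obtain ⟨j, hj, hz⟩ := h.exists_later h1 (hkk'.le.trans hC) hpos
    have : ∑ j ∈ Finset.Icc 1 τ, z k' j = 0 := by
      refine Finset.sum_eq_zero fun j' hj' => ?_
      by_contra hne
      have := h.2.2.2.2.2.2 k k' j j' hkk' hz (lt_of_le_of_ne (h.2.1 k' j') (Ne.symm hne))
      have := (Finset.mem_Icc.1 hj').2
      omega
    simp [left, this]

lemma IsPolicy.lt_deadline (h : M.IsPolicy d z) {i : ℕ} (h1 : 1 ≤ i) (hC : i ≤ M.C) {τ : ℕ}
    (hpos : 0 < M.left z τ i) : τ < M.deadline d i := by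
  by_contra! hle
  rw [left, h.sum_eq h1 hC hle] at hpos
  linarith

/-- If the forward algorithm, with stalls `dv ≤ d`, is blocked by the buffer at chunk `i` in slot
`j`, then the policy downloads nothing of any chunk `k ≥ i` in slot `j`. -/
lemma IsPolicy.buffer_block (h : M.IsPolicy d z) (hLB : (M.L : ℝ) ≤ M.Bm) {dv : ℕ → ℕ}
    (hdv : ∀ k, dv k ≤ d k) {i j k : ℕ} (h1 : 1 ≤ i) (hik : i ≤ k) (hC : k ≤ M.C) (hj : 1 ≤ j)
    (hbuf : M.Bm < (M.L : ℝ) * (1 + (((Finset.Icc 1 (i - 1)).filter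
        (fun i' => j < (i' - 1) * M.L + M.s + dv i')).card : ℝ))) : z k j = 0 := by
  by_contra hne
  have hz : 0 < z k j := lt_of_le_of_ne (h.2.1 k j) (Ne.symm hne)
  set F := (Finset.Icc 1 (i - 1)).filter (fun i' => j < (i' - 1) * M.L + M.s + dv i') with hF
  have hkpos : 0 < ∑ j' ∈ Finset.Icc 1 j, z k j' :=
    Finset.sum_pos' (fun j' _ => h.2.1 k j') ⟨j, Finset.mem_Icc.2 ⟨hj, le_rfl⟩, hz⟩
  -- Every chunk up to `k` has been started, since the policy is already working on `k`.
  have hstart : ∀ m, 1 ≤ m → m ≤ k → 0 < ∑ j' ∈ Finset.Icc 1 j, z m j' := by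
    intro m hm1 hmk
    rcases hmk.eq_or_lt with rfl | hlt
    · exact hkpos
    · by_contra! hle
      have hpos : 0 < M.left z j m := by
        unfold left
        linarith [M.hX0]
      have := (h.inOrder_left j).2 m k hm1 hlt hC hpos
      unfold left at this
      linarith
  have hdead : ∀ m ∈ F, j < M.deadline d m := by
    intro m hm
    have := (Finset.mem_filter.1 hm).2
    have := hdv m
    unfold deadline
    omega
  have hmemF : ∀ m ∈ F, 1 ≤ m ∧ m < i := by
    intro m hm
    have := Finset.mem_Icc.1 (Finset.mem_filter.1 hm).1
    omega
  have hne : F.Nonempty := by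
    rw [Finset.nonempty_iff_ne_empty]
    intro hemp
    rw [hemp] at hbuf
    simp at hbuf
    linarith
  obtain ⟨m, hm⟩ := hne
  have hdi : j < M.deadline d i := by
    refine (hdead m hm).trans_le ?_
    have hmi := hmemF m hm
    have e1 := h.1 hmi.2.le
    have e2 : (m - 1) * M.L ≤ (i - 1) * M.L := Nat.mul_le_mul_right _ (by omega)
    unfold deadline
    omega
  have hsub : insert i F ⊆ (Finset.Icc 1 M.C).filter
      (fun i => j < M.deadline d i ∧ 0 < ∑ j' ∈ Finset.Icc 1 j, z i j') := by
    intro m hm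
    rw [Finset.mem_insert] at hm
    rw [Finset.mem_filter, Finset.mem_Icc]
    rcases hm with rfl | hm
    · exact ⟨⟨h1, hik.trans hC⟩, hdi, hstart m h1 hik⟩
    · have hmi := hmemF m hm
      exact ⟨⟨hmi.1, by omega⟩, hdead m hm, hstart m hmi.1 (by omega)⟩
  have hcard := Finset.card_le_card hsub
  rw [Finset.card_insert_of_notMem (fun hi => (hmemF i hi).2.false)] at hcard
  have hcard' : (1 : ℝ) + (F.card : ℝ) ≤ (((Finset.Icc 1 M.C).filter
      (fun i => j < M.deadline d i ∧ 0 < ∑ j' ∈ Finset.Icc 1 j, z i j')).card : ℝ) := by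
    rw [add_comm]
    exact_mod_cast hcard
  have := h.2.2.2.2.2.1 j
  have := mul_le_mul_of_nonneg_left hcard' (Nat.cast_nonneg (α := ℝ) M.L)
  linarith

/-- One slot of the forward algorithm preserves the comparison with the policy. The statement is
about an intermediate call, at chunk `i` with bandwidth `b` left; `hsum` says that using up `b`
would bring the algorithm's total level with or ahead of the policy's total after slot `j + 1`. -/
lemma nsInner_spec (h : M.IsPolicy d z) (hLB : (M.L : ℝ) ≤ M.Bm) (j : ℕ) :
    ∀ (fuel i : ℕ) (b : ℝ) (rem : ℕ → ℝ) (dv : ℕ → ℕ),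
      1 ≤ i → M.C < i + fuel → 0 ≤ b → M.InOrder rem →
      (∀ k, 1 ≤ k → k < i → rem k ≤ 0) →
      (∀ k, 1 ≤ k → k ≤ M.C → rem k ≤ M.left z j k) →
      (∑ k ∈ Finset.Icc 1 M.C, rem k - b ≤ ∑ k ∈ Finset.Icc 1 M.C, M.left z (j + 1) k) →
      (∀ k, dv k ≤ d k) →
      M.InOrder (fun k => rem k - (M.nsInner (j + 1) fuel i b rem dv).1 k) ∧
      (∀ k, 1 ≤ k → k ≤ M.C →
        rem k - (M.nsInner (j + 1) fuel i b rem dv).1 k ≤ M.left z (j + 1) k) ∧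
      (∀ k, (M.nsInner (j + 1) fuel i b rem dv).2 k ≤ d k) := by
  have hleft := h.inOrder_left (j + 1)
  intro fuel
  induction fuel with
  | zero =>
    intro i b rem dv h1 hfuel hb hord hdone hold hsum hdv
    simp only [nsInner, sub_zero]
    exact ⟨hord, fun k hk1 hkC =>
      (hdone k hk1 (by omega)).trans (hleft.1 k hk1 hkC).1, hdv⟩
  | succ fuel ih =>
    intro i b rem dv h1 hfuel hb hord hdone hold hsum hdv
    rw [nsInner]
    split_ifs with c1 c2 c3 c4 c5
    · simp only [sub_zero]
      exact ⟨hord, fun k hk1 hkC =>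
        (hdone k hk1 (by omega)).trans (hleft.1 k hk1 hkC).1, hdv⟩
    · refine ih (i + 1) b rem dv (by omega) (by omega) hb hord (fun k hk1 hki => ?_) hold hsum hdv
      rcases (Nat.lt_succ_iff.1 hki).eq_or_lt with rfl | hlt
      · exact c2
      · exact hdone k hk1 hlt
    · simp only [sub_zero]
      exact ⟨hord, fun k hk1 hkC => hord.le_of_sum_le hleft (by linarith) hk1 hkC, hdv⟩
    · simp only [sub_zero]
      refine ⟨hord, fun k hk1 hkC => ?_, hdv⟩
      rcases lt_or_ge k i with hki | hik
      · exact (hdone k hk1 hki).trans (hleft.1 k hk1 hkC).1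
      · rw [left_succ, h.buffer_block hLB hdv h1 hik hkC (by omega) c4, sub_zero]
        exact hold k hk1 hkC
    · have hfun : (fun k => rem k - (if k = i then b else 0))
          = Function.update rem i (rem i - b) := by
        funext k
        by_cases hk : k = i
        · subst hk
          simp
        · simp [hk]
      have hord' := hord.update (v := rem i - b) (not_le.1 c2) hdone (by linarith) (by linarith)
      refine ⟨?_, fun k hk1 hkC => ?_, hdv⟩
      · simpa only [hfun] using hord'
      · have := hord'.le_of_sum_le hleft
          (by rw [sum_update_Icc rem _ h1 (not_lt.1 c1)]; linarith) hk1 hkC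
        rwa [← hfun] at this
    · have hpos : 0 < rem i := not_le.1 c2
      have hiC : i ≤ M.C := not_lt.1 c1
      have hfun : ∀ f : ℕ → ℝ, (fun k => rem k - ((if k = i then rem i else 0) + f k))
          = fun k => Function.update rem i 0 k - f k := by
        intro f
        funext k
        by_cases hk : k = i
        · subst hk
          simp
        · simp [hk]
      have key := ih (i + 1) (b - rem i) (Function.update rem i 0)
        (Function.update dv i (max (dv (i - 1)) (j + 1 - ((i - 1) * M.L + M.s))))
        (by omega) (by omega) (by linarith)
        (hord.update hpos hdone le_rfl hpos.le)
        (fun k hk1 hki => by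
          by_cases hk : k = i
          · simp [hk]
          · simpa [hk] using hdone k hk1 (by omega))
        (fun k hk1 hkC => by
          by_cases hk : k = i
          · subst hk
            simpa using ((h.inOrder_left j).1 k hk1 hkC).1
          · simpa [hk] using hold k hk1 hkC)
        (by rw [sum_update_Icc rem _ h1 hiC]; linarith)
        (fun k => by
          by_cases hk : k = i
          · subst hk
            -- The policy has not finished chunk `k` by slot `j`, so its deadline is at least `j + 1`.
            have e1 := h.lt_deadline h1 hiC (hpos.trans_le (hold k h1 hiC))
            have e2 := hdv (k - 1)
            have e3 := h.1 (Nat.sub_le k 1)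
            unfold deadline at e1
            rw [Function.update_self]
            exact max_le (e2.trans e3) (by omega)
          · simpa [hk] using hdv k)
      refine ⟨?_, fun k hk1 hkC => ?_, key.2.2⟩
      · exact (hfun _).symm ▸ key.1
      · exact (congrFun (hfun _) k).trans_le (key.2.1 k hk1 hkC)

lemma nsState_spec (h : M.IsPolicy d z) (hLB : (M.L : ℝ) ≤ M.Bm) (j : ℕ) :
    M.InOrder (M.nsState j).1 ∧
    (∀ k, 1 ≤ k → k ≤ M.C → (M.nsState j).1 k ≤ M.left z j k) ∧
    (∀ k, (M.nsState j).2 k ≤ d k) := by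
  induction j with
  | zero =>
    have hval : ∀ k, 1 ≤ k → k ≤ M.C → (M.nsState 0).1 k = M.X0 := by
      intro k h1 hC
      simp only [nsState, Finset.mem_Icc]
      exact if_pos ⟨h1, hC⟩
    refine ⟨⟨fun k h1 hC => ?_, fun k k' h1 hkk' hC _ => hval k' (by omega) hC⟩,
      fun k h1 hC => ?_, fun k => Nat.zero_le _⟩
    · rw [hval k h1 hC]
      exact ⟨M.hX0.le, le_rfl⟩
    · rw [hval k h1 hC]
      simp [left]
  | succ j ih =>
    obtain ⟨hord, hle, hdv⟩ := ih
    refine nsInner_spec h hLB j (M.C + 1) 1 (M.B (j + 1)) (M.nsState j).1 (M.nsState j).2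
      le_rfl (by omega) (M.hB _) hord (fun k _ _ => by omega) hle ?_ hdv
    have e1 : ∑ k ∈ Finset.Icc 1 M.C, (M.nsState j).1 k ≤ ∑ k ∈ Finset.Icc 1 M.C, M.left z j k :=
      Finset.sum_le_sum fun k hk =>
        hle k (Finset.mem_Icc.1 hk).1 (Finset.mem_Icc.1 hk).2
    have e2 := h.2.2.2.2.1 (j + 1)
    simp only [left_succ, Finset.sum_sub_distrib]
    linarith

end Policy

/-! ### The degenerate case `B_m < L` -/

/-- When a single chunk does not fit into the buffer, the algorithm idles in every slot. -/
lemma nsInner_of_lt (M : NSModel) (hLB : M.Bm < M.L) (j : ℕ) :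
    ∀ (fuel i : ℕ) (b : ℝ) (rem : ℕ → ℝ) (dv : ℕ → ℕ),
      M.nsInner j fuel i b rem dv = (fun _ => 0, dv) := by
  intro fuel
  induction fuel with
  | zero => intros; rfl
  | succ fuel ih =>
    intro i b rem dv
    have hblock : M.Bm < (M.L : ℝ) * (1 + (((Finset.Icc 1 (i - 1)).filter
        (fun i' => j < (i' - 1) * M.L + M.s + dv i')).card : ℝ)) :=
      hLB.trans_le (le_mul_of_one_le_right (Nat.cast_nonneg _)
        (le_add_of_nonneg_right (Nat.cast_nonneg _)))
    rw [nsInner, ih, if_pos hblock]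
    simp only [ite_self]

lemma nsState_of_lt (M : NSModel) (hLB : M.Bm < M.L) (j : ℕ) : M.nsState j = M.nsState 0 := by
  induction j with
  | zero => rfl
  | succ j ih =>
    rw [← ih]
    conv_lhs => rw [nsState, nsInner_of_lt M hLB]
    simp only [sub_zero]

end NSModel

/-- Lemma 3: the no-skip base-layer forward algorithm achieves the
minimum possible total stall duration, and completes every chunk no later than any
other in-order feasible no-skip policy. -/
theorem noskip_forward_min_stall (M : NSModel) (d : ℕ → ℕ) (z : ℕ → ℕ → ℝ)
    (h : M.IsPolicy d z) :
    M.nsStall M.C ≤ d M.C ∧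
    ∀ i ∈ Finset.Icc 1 M.C,
      M.nsCompl i ≤ sInf {j | ∑ j' ∈ Finset.Icc 1 j, z i j' = M.X0} := by
  have hstall : ∀ {m : ℕ}, (∀ j, (M.nsState j).2 M.C ≤ m) → M.nsStall M.C ≤ m := by
    intro m hm
    refine csSup_le ⟨_, 0, rfl⟩ ?_
    rintro k ⟨j, rfl⟩
    exact hm j
  rcases lt_or_ge M.Bm (M.L : ℝ) with hlt | hLB
  · refine ⟨hstall fun j => ?_, fun i hi => ?_⟩
    · rw [M.nsState_of_lt hlt]
      exact Nat.zero_le _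
    · -- No chunk is ever completed, so `nsCompl` is the infimum of the empty set.
      have hempty : {j | (M.nsState j).1 i ≤ 0} = ∅ := by
        ext j
        rw [Set.mem_ofPred_eq, M.nsState_of_lt hlt]
        simp only [NSModel.nsState, if_pos hi, Set.mem_empty_iff_false, iff_false, not_le]
        exact M.hX0
      rw [NSModel.nsCompl, hempty, Nat.sInf_empty]
      exact Nat.zero_le _
  · refine ⟨hstall fun j => (NSModel.nsState_spec h hLB j).2.2 M.C, fun i hi => ?_⟩
    obtain ⟨h1, hC⟩ := Finset.mem_Icc.1 hi
    have hmem := Nat.sInf_mem (s := {j | ∑ j' ∈ Finset.Icc 1 j, z i j' = M.X0})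
      ⟨M.deadline d i, h.sum_eq h1 hC le_rfl⟩
    refine Nat.sInf_le (((NSModel.nsState_spec h hLB _).2.1 i h1 hC).trans ?_)
    rw [Set.mem_ofPred_eq] at hmem
    rw [NSModel.left, hmem, sub_self]
end
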